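/- arXiv:1408.4252 — 4 statements merged into one kernel-verified Lean document; each statement's English description precedes it below -/
import Mathlib

section
/- Let (X, 𝒜) be a standard Borel space, ν a finite measure on X, and f : X → X a bijection such that f and f⁻¹ are measurable and f preserves ν. Assume that the set of periodic points {x ∈ X : f^n(x) = x for some n ≥ 1} has ν-measure zero. Then for every integer ℓ₀ ≥ 1 there exist measurable subsets Y₀, Y₁, …, Y_{ℓ₀−1} of X such that the sets f^k(Y_ℓ), for 0 ≤ ℓ ≤ ℓ₀−1 and 0 ≤ k ≤ ℓ₀+ℓ−1, are pairwise disjoint (i.e., f^k(Y_ℓ) ∩ f^{k′}(Y_{ℓ′}) = ∅ whenever (k,ℓ) ≠ (k′,ℓ′)) and the complement in X of their union has ν-measure zero. -/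
open MeasureTheory

/-!
The towers are built over a measurable *marker set* `A`: the orbit of a point of `A` does not return
to `A` before time `ℓ₀`, yet every point without a period in `[1, ℓ₀)` is at orbit distance less
than `ℓ₀` from `A`. For `a ∈ A`, proximity to `A` of the point `f^ℓ₀ a` gives a return of `a` to `A`
before time `2ℓ₀`, so first return times lie in `[ℓ₀, 2ℓ₀)`. The set `Y_ℓ` consists of the points of
`A` with first return time `ℓ₀ + ℓ`, and a point of the space lies in the column above its last
visit to `A`.

The set `A` is found greedily. If `f^i x ≠ x`, one of countably many measurable sets contains `x`
but not `f^i x`; intersecting such conditions over `1 ≤ i < ℓ₀` covers the points without a short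
period by countably many measurable sets `C n` disjoint from their first `ℓ₀ - 1` iterates. At stage
`n` one adds the points of `C n` at orbit distance at least `ℓ₀` from everything chosen so far.
-/

section Markers

variable {X : Type*} {f : X → X} {A B : Set X} {L : ℕ}

/-- The set of points having a period in `[1, L)`; these are the points which no family of towers
of heights at least `L` can cover. -/
def shortPeriodicPts (f : X → X) (L : ℕ) : Set X :=
  {x | ∃ n, 1 ≤ n ∧ n < L ∧ f^[n] x = x}

/-- A set is `L`-separated along the orbits of `f` if no point of it returns to it at a time in
`[1, L)`; such a set can serve as the base of towers of height at least `L`. -/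
def OrbitSeparated (f : X → X) (L : ℕ) (A : Set X) : Prop :=
  ∀ x ∈ A, ∀ i, 1 ≤ i → i < L → f^[i] x ∉ A

/-- The set of points at orbit distance less than `L` from `A`, in the past or in the future. The
past is expressed by images, so that no inverse of `f` is needed. -/
def orbitThickening (f : X → X) (L : ℕ) (A : Set X) : Set X :=
  ⋃ i < L, f^[i] ⁻¹' A ∪ f^[i] '' A

/-- The set of points of `A` whose first return to `A` under `f` occurs at time `r`; it is the base
of the tower of height `r`. -/
def firstReturnSet (f : X → X) (A : Set X) (r : ℕ) : Set X :=
  {x | x ∈ A ∧ f^[r] x ∈ A ∧ ∀ i, 1 ≤ i → i < r → f^[i] x ∉ A}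

/-- The greedy construction of a maximal `L`-separated set from the sets `C n`: stage `n + 1` adds
the points of `C n` at orbit distance at least `L` from stage `n`. -/
def greedyMarker (f : X → X) (L : ℕ) (C : ℕ → Set X) : ℕ → Set X
  | 0 => ∅
  | n + 1 => greedyMarker f L C n ∪ (C n \ orbitThickening f L (greedyMarker f L C n))

section Orbits

lemma iterate_mem_shortPeriodicPts_iff (hf : f.Injective) (k : ℕ) {x : X} :
    f^[k] x ∈ shortPeriodicPts f L ↔ x ∈ shortPeriodicPts f L := by
  have hcomm (n : ℕ) : f^[n] (f^[k] x) = f^[k] (f^[n] x) :=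
    (Function.Commute.refl f).iterate_iterate n k x
  simp only [shortPeriodicPts, Set.mem_ofPred_eq, hcomm, (hf.iterate k).eq_iff]

lemma mem_orbitThickening {x : X} :
    x ∈ orbitThickening f L A ↔ ∃ i < L, f^[i] x ∈ A ∨ ∃ a ∈ A, f^[i] a = x := by
  simp [orbitThickening]

lemma subset_orbitThickening (hL : 1 ≤ L) : A ⊆ orbitThickening f L A :=
  fun _ hx => mem_orbitThickening.2 ⟨0, hL, Or.inl hx⟩

lemma orbitThickening_mono (hAB : A ⊆ B) : orbitThickening f L A ⊆ orbitThickening f L B :=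
  Set.iUnion₂_mono fun _ _ => Set.union_subset_union (Set.preimage_mono hAB) (Set.image_mono hAB)

lemma exists_iterate_eq_of_mem_orbitThickening {z : X} (hz : z ∈ orbitThickening f L A) :
    ∃ k, ∃ a ∈ A, f^[k] a = f^[L] z := by
  obtain ⟨i, hi, hfz | ⟨a, ha, rfl⟩⟩ := mem_orbitThickening.1 hz
  · exact ⟨L - i, f^[i] z, hfz, by rw [← Function.iterate_add_apply, Nat.sub_add_cancel hi.le]⟩
  · exact ⟨L + i, a, ha, Function.iterate_add_apply f L i a⟩

lemma exists_iterate_mem_of_iterate_mem_orbitThickening (hf : f.Injective) {z : X}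
    (hz : f^[L] z ∈ orbitThickening f L A) :
    ∃ n, 1 ≤ n ∧ n < 2 * L ∧ f^[n] z ∈ A := by
  obtain ⟨i, hi, hfz | ⟨a, ha, haz⟩⟩ := mem_orbitThickening.1 hz
  · exact ⟨i + L, by lia, by lia, by rwa [Function.iterate_add_apply]⟩
  · refine ⟨L - i, by lia, by lia, ?_⟩
    have : a = f^[L - i] z := hf.iterate i <| by
      rw [haz, ← Function.iterate_add_apply, Nat.add_sub_cancel' hi.le]
    rwa [← this]

lemma exists_last_visit {x : X} (hx : ∃ k, ∃ a ∈ A, f^[k] a = x) :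
    ∃ k, ∃ a ∈ A, f^[k] a = x ∧ ∀ r, 1 ≤ r → f^[r] a ∈ A → k < r := by
  classical
  obtain ⟨a, ha, hax⟩ := Nat.find_spec hx
  refine ⟨Nat.find hx, a, ha, hax, fun r hr hra => ?_⟩
  by_contra! hle
  refine Nat.find_min hx (m := Nat.find hx - r) (by lia) ⟨f^[r] a, hra, ?_⟩
  rw [← Function.iterate_add_apply, Nat.sub_add_cancel hle, hax]

end Orbits

section OrbitSeparated

lemma OrbitSeparated.disjoint_shortPeriodicPts (hA : OrbitSeparated f L A) :
    Disjoint A (shortPeriodicPts f L) :=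
  Set.disjoint_left.2 fun x hx ⟨n, hn, hnL, hper⟩ => hA x hx n hn hnL (hper.symm ▸ hx)

lemma OrbitSeparated.union_diff_orbitThickening (hA : OrbitSeparated f L A)
    (hB : OrbitSeparated f L B) : OrbitSeparated f L (A ∪ (B \ orbitThickening f L A)) := by
  rintro x (hx | ⟨hxB, hxA⟩) i hi hiL (hfx | ⟨hfxB, hfxA⟩)
  · exact hA x hx i hi hiL hfx
  · exact hfxA (mem_orbitThickening.2 ⟨i, hiL, Or.inr ⟨x, hx, rfl⟩⟩)
  · exact hxA (mem_orbitThickening.2 ⟨i, hiL, Or.inl hfx⟩)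
  · exact hB x hxB i hi hiL hfxB

lemma OrbitSeparated.iUnion_of_monotone {G : ℕ → Set X} (hG : Monotone G)
    (hsep : ∀ n, OrbitSeparated f L (G n)) : OrbitSeparated f L (⋃ n, G n) := by
  intro x hx i hi hiL hfx
  obtain ⟨m, hm⟩ := Set.mem_iUnion.1 hx
  obtain ⟨n, hn⟩ := Set.mem_iUnion.1 hfx
  exact hsep (max m n) x (hG (le_max_left m n) hm) i hi hiL (hG (le_max_right m n) hn)

end OrbitSeparated

section FirstReturn

lemma exists_mem_firstReturnSet {a : X} (ha : a ∈ A) {n : ℕ} (hn : 1 ≤ n) (hna : f^[n] a ∈ A) :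
    ∃ r, 1 ≤ r ∧ r ≤ n ∧ a ∈ firstReturnSet f A r := by
  classical
  have hret : ∃ r, 1 ≤ r ∧ f^[r] a ∈ A := ⟨n, hn, hna⟩
  obtain ⟨hr, hra⟩ := Nat.find_spec hret
  exact ⟨Nat.find hret, hr, Nat.find_min' hret ⟨hn, hna⟩, ha, hra,
    fun i hi hir hia => Nat.find_min hret hir ⟨hi, hia⟩⟩

lemma eq_of_mem_firstReturnSet {y : X} {r r' : ℕ} (hr : 1 ≤ r) (hr' : 1 ≤ r')
    (hy : y ∈ firstReturnSet f A r) (hy' : y ∈ firstReturnSet f A r') : r = r' := by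
  rcases lt_trichotomy r r' with hlt | heq | hgt
  · exact (hy'.2.2 r hr hlt hy.2.1).elim
  · exact heq
  · exact (hy.2.2 r' hr' hgt hy'.2.1).elim

lemma eq_of_iterate_eq_of_mem_firstReturnSet (hf : f.Injective) {r k k' : ℕ} {y y' : X}
    (hy : y ∈ A) (hy' : y' ∈ firstReturnSet f A r) (hkk' : k ≤ k') (hk' : k' < r)
    (h : f^[k] y = f^[k'] y') : k = k' := by
  obtain ⟨d, rfl⟩ := Nat.exists_eq_add_of_le hkk'
  obtain rfl : y = f^[d] y' := hf.iterate k (by rw [h, Function.iterate_add_apply])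
  by_contra hne
  exact hy'.2.2 d (by lia) (by lia) hy

lemma disjoint_image_firstReturnSet (hf : f.Injective) {r r' k k' : ℕ} (hk : k < r) (hk' : k' < r')
    (hne : (k, r) ≠ (k', r')) :
    Disjoint (f^[k] '' firstReturnSet f A r) (f^[k'] '' firstReturnSet f A r') := by
  rw [Set.disjoint_left]
  rintro _ ⟨y, hy, rfl⟩ ⟨y', hy', h⟩
  obtain rfl : k = k' := by
    rcases le_total k k' with hle | hle
    · exact eq_of_iterate_eq_of_mem_firstReturnSet hf hy.1 hy' hle hk' h.symm
    · exact (eq_of_iterate_eq_of_mem_firstReturnSet hf hy'.1 hy hle hk h).symm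
  obtain rfl : y' = y := hf.iterate k h
  exact hne (by rw [eq_of_mem_firstReturnSet (by lia) (by lia) hy hy'])

lemma OrbitSeparated.exists_lt_mem_firstReturnSet (hA : OrbitSeparated f L A) (hf : f.Injective)
    (hcover : (shortPeriodicPts f L)ᶜ ⊆ orbitThickening f L A) {a : X} (ha : a ∈ A) :
    ∃ ℓ < L, a ∈ firstReturnSet f A (L + ℓ) := by
  have hfa : f^[L] a ∉ shortPeriodicPts f L := by
    rw [iterate_mem_shortPeriodicPts_iff hf]
    exact hA.disjoint_shortPeriodicPts.notMem_of_mem_left ha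
  obtain ⟨n, hn, hnL, hna⟩ := exists_iterate_mem_of_iterate_mem_orbitThickening hf (hcover hfa)
  obtain ⟨r, hr, hrn, hra⟩ := exists_mem_firstReturnSet ha hn hna
  have hLr : L ≤ r := not_lt.1 fun hlt => hA a ha r hr hlt hra.2.1
  obtain ⟨ℓ, rfl⟩ := Nat.exists_eq_add_of_le hLr
  exact ⟨ℓ, by lia, hra⟩

lemma OrbitSeparated.compl_iUnion_image_firstReturnSet (hA : OrbitSeparated f L A)
    (hf : f.Bijective) (hcover : (shortPeriodicPts f L)ᶜ ⊆ orbitThickening f L A) :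
    (⋃ ℓ ∈ Finset.range L, ⋃ k ∈ Finset.range (L + ℓ), f^[k] '' firstReturnSet f A (L + ℓ))ᶜ =
      shortPeriodicPts f L := by
  rw [compl_eq_comm]
  ext x
  simp only [Set.mem_iUnion, Finset.mem_range, exists_prop, Set.mem_compl_iff]
  constructor
  · intro hx
    obtain ⟨z, rfl⟩ := hf.surjective.iterate L x
    have hz : z ∉ shortPeriodicPts f L := by rwa [iterate_mem_shortPeriodicPts_iff hf.1] at hx
    obtain ⟨k, a, ha, hka, hlast⟩ :=
      exists_last_visit (exists_iterate_eq_of_mem_orbitThickening (hcover hz))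
    obtain ⟨ℓ, hℓ, haℓ⟩ := hA.exists_lt_mem_firstReturnSet hf.1 hcover ha
    exact ⟨ℓ, hℓ, k, hlast (L + ℓ) (by lia) haℓ.2.1, a, haℓ, hka⟩
  · rintro ⟨ℓ, -, k, -, a, ha, rfl⟩
    rw [iterate_mem_shortPeriodicPts_iff hf.1]
    exact hA.disjoint_shortPeriodicPts.notMem_of_mem_left ha.1

end FirstReturn

section Greedy

variable {C : ℕ → Set X}

lemma greedyMarker_monotone : Monotone (greedyMarker f L C) :=
  monotone_nat_of_le_succ fun _ => Set.subset_union_left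

lemma orbitSeparated_greedyMarker (hC : ∀ n, OrbitSeparated f L (C n)) (n : ℕ) :
    OrbitSeparated f L (greedyMarker f L C n) := by
  induction n with
  | zero => exact fun _ hx => hx.elim
  | succ n ih => exact ih.union_diff_orbitThickening (hC n)

lemma iUnion_subset_orbitThickening_iUnion_greedyMarker (hL : 1 ≤ L) :
    ⋃ n, C n ⊆ orbitThickening f L (⋃ n, greedyMarker f L C n) := by
  refine Set.iUnion_subset fun n x hx => ?_
  by_cases hclose : x ∈ orbitThickening f L (greedyMarker f L C n)
  · exact orbitThickening_mono (Set.subset_iUnion _ n) hclose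
  · exact subset_orbitThickening hL (Set.mem_iUnion.2 ⟨n + 1, Or.inr ⟨hx, hclose⟩⟩)

end Greedy

section Measurable

variable [MeasurableSpace X]

lemma measurableSet_firstReturnSet (hf : Measurable f) (hA : MeasurableSet A) (r : ℕ) :
    MeasurableSet (firstReturnSet f A r) := by
  have hvisit (i : ℕ) : MeasurableSet {x | f^[i] x ∈ A} := hf.iterate i hA
  have hnovisit : MeasurableSet {x | ∀ i, 1 ≤ i → i < r → f^[i] x ∉ A} := by
    simp only [Set.ofPred_forall]
    exact .iInter fun i => .iInter fun _ => .iInter fun _ => (hvisit i).compl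
  exact hA.inter ((hvisit r).inter hnovisit)

lemma measurableSet_image_iterate (hf : MeasurableEmbedding f) (hA : MeasurableSet A) (n : ℕ) :
    MeasurableSet (f^[n] '' A) := by
  induction n with
  | zero => simpa using hA
  | succ n ih =>
    rw [Function.iterate_succ', Set.image_comp]
    exact hf.measurableSet_image' ih

lemma measurableSet_orbitThickening (hf : MeasurableEmbedding f) (hA : MeasurableSet A) :
    MeasurableSet (orbitThickening f L A) :=
  .iUnion fun i => .iUnion fun _ =>
    (hf.measurable.iterate i hA).union (measurableSet_image_iterate hf hA i)

lemma measurableSet_greedyMarker (hf : MeasurableEmbedding f) {C : ℕ → Set X}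
    (hC : ∀ n, MeasurableSet (C n)) (n : ℕ) : MeasurableSet (greedyMarker f L C n) := by
  induction n with
  | zero => exact .empty
  | succ n ih => exact ih.union ((hC n).diff (measurableSet_orbitThickening hf ih))

variable [MeasurableSpace.CountablySeparated X]

variable (X) in
lemma exists_seq_measurableSet_mem_notMem :
    ∃ U : ℕ → Set X, (∀ n, MeasurableSet (U n)) ∧ ∀ x y, x ≠ y → ∃ n, x ∈ U n ∧ y ∉ U n := by
  obtain ⟨φ, hφ, hinj⟩ := MeasurableSpace.measurable_injection_nat_bool_of_countablySeparated X
  obtain ⟨e, he⟩ := exists_surjective_nat (ℕ × Bool)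
  refine ⟨fun n => {x | φ x (e n).1 = (e n).2}, fun n => ?_, fun x y hxy => ?_⟩
  · exact (measurable_pi_apply (e n).1).comp hφ (measurableSet_singleton (e n).2)
  · obtain ⟨m, hm⟩ := Function.ne_iff.1 (hinj.ne hxy)
    obtain ⟨n, hn⟩ := he (m, φ x m)
    exact ⟨n, by simp [hn], by simpa [hn] using hm.symm⟩

lemma exists_seq_orbitSeparated_cover (hf : Measurable f) (L : ℕ) :
    ∃ C : ℕ → Set X, (∀ n, MeasurableSet (C n)) ∧ (∀ n, OrbitSeparated f L (C n)) ∧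
      (shortPeriodicPts f L)ᶜ ⊆ ⋃ n, C n := by
  obtain ⟨U, hU, hsep⟩ := exists_seq_measurableSet_mem_notMem X
  obtain ⟨e, he⟩ := exists_surjective_nat (Finset.Ico 1 L → ℕ)
  refine ⟨fun n => ⋂ i : Finset.Ico 1 L, U (e n i) \ f^[i] ⁻¹' U (e n i),
    fun n => .iInter fun i => (hU _).diff (hf.iterate i (hU _)), ?_, ?_⟩
  · intro n x hx i hi hiL hfx
    have hi' : i ∈ Finset.Ico 1 L := Finset.mem_Ico.2 ⟨hi, hiL⟩
    exact (Set.mem_iInter.1 hx ⟨i, hi'⟩).2 (Set.mem_iInter.1 hfx ⟨i, hi'⟩).1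
  · intro x hx
    have hne (i : Finset.Ico 1 L) : x ≠ f^[i] x := fun h =>
      hx ⟨i, (Finset.mem_Ico.1 i.2).1, (Finset.mem_Ico.1 i.2).2, h.symm⟩
    choose s hs using fun i : Finset.Ico 1 L => hsep x (f^[i] x) (hne i)
    obtain ⟨n, rfl⟩ := he s
    exact Set.mem_iUnion.2 ⟨n, Set.mem_iInter.2 hs⟩

lemma exists_measurableSet_orbitSeparated_cover (hf : MeasurableEmbedding f) (hL : 1 ≤ L) :
    ∃ A, MeasurableSet A ∧ OrbitSeparated f L A ∧
      (shortPeriodicPts f L)ᶜ ⊆ orbitThickening f L A := by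
  obtain ⟨C, hC, hsep, hcover⟩ := exists_seq_orbitSeparated_cover hf.measurable L
  exact ⟨⋃ n, greedyMarker f L C n, .iUnion (measurableSet_greedyMarker hf hC),
    .iUnion_of_monotone greedyMarker_monotone (orbitSeparated_greedyMarker hsep),
    hcover.trans (iUnion_subset_orbitThickening_iUnion_greedyMarker hL)⟩

end Measurable

end Markers

theorem rokhlin_tower_decomposition_general {X : Type*} [MeasurableSpace X]
    [MeasurableSpace.CountablySeparated X] (f : X ≃ᵐ X) {ℓ₀ : ℕ} (hℓ₀ : 1 ≤ ℓ₀) :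
    ∃ Y : ℕ → Set X,
      (∀ ℓ, MeasurableSet (Y ℓ)) ∧
      (∀ ℓ ℓ' k k' : ℕ, k < ℓ₀ + ℓ → k' < ℓ₀ + ℓ' →
        (k, ℓ) ≠ (k', ℓ') → Disjoint (f^[k] '' Y ℓ) (f^[k'] '' Y ℓ')) ∧
      (⋃ ℓ ∈ Finset.range ℓ₀, ⋃ k ∈ Finset.range (ℓ₀ + ℓ), f^[k] '' Y ℓ)ᶜ =
        shortPeriodicPts f ℓ₀ := by
  obtain ⟨A, hA, hsep, hcover⟩ :=
    exists_measurableSet_orbitSeparated_cover f.measurableEmbedding hℓ₀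
  refine ⟨fun ℓ => firstReturnSet f A (ℓ₀ + ℓ),
    fun ℓ => measurableSet_firstReturnSet f.measurable hA _, fun ℓ ℓ' k k' hk hk' hne => ?_,
    hsep.compl_iUnion_image_firstReturnSet f.bijective hcover⟩
  exact disjoint_image_firstReturnSet f.injective hk hk' (by simpa using hne)

/-- **Lemma 3.9 (Kakutani–Rokhlin towers).**  Let `f` be a measure-preserving bi-measurable
bijection of a standard Borel space with a finite invariant measure `ν`, whose periodic
points have `ν`-measure zero.  Then for every `ℓ₀ ≥ 1` there are measurable sets
`Y₀, …, Y_{ℓ₀−1}` whose images `f^k(Y_ℓ)`, for `0 ≤ ℓ ≤ ℓ₀−1` and `0 ≤ k ≤ ℓ₀+ℓ−1`, are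
pairwise disjoint and fill the space up to a `ν`-null set. -/
theorem rokhlin_tower_decomposition {X : Type*} [MeasurableSpace X] [StandardBorelSpace X]
    (ν : Measure X) [IsFiniteMeasure ν]
    (f g : X → X) (hf : Measurable f) (hg : Measurable g)
    (hgf : Function.LeftInverse g f) (hfg : Function.RightInverse g f)
    (hpres : MeasurePreserving f ν ν)
    (hper : ν {x | ∃ n : ℕ, 1 ≤ n ∧ f^[n] x = x} = 0)
    (ℓ₀ : ℕ) (hℓ₀ : 1 ≤ ℓ₀) :
    ∃ Y : ℕ → Set X,
      (∀ ℓ < ℓ₀, MeasurableSet (Y ℓ)) ∧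
      (∀ ℓ ℓ' k k' : ℕ, ℓ < ℓ₀ → ℓ' < ℓ₀ → k < ℓ₀ + ℓ → k' < ℓ₀ + ℓ' →
        (k, ℓ) ≠ (k', ℓ') → Disjoint (f^[k] '' Y ℓ) (f^[k'] '' Y ℓ')) ∧
      ν ((⋃ ℓ ∈ Finset.range ℓ₀, ⋃ k ∈ Finset.range (ℓ₀ + ℓ), f^[k] '' Y ℓ)ᶜ) = 0 := by
  obtain ⟨Y, hY, hdisj, hcompl⟩ :=
    rokhlin_tower_decomposition_general ⟨⟨f, g, hgf, hfg⟩, hf, hg⟩ hℓ₀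
  refine ⟨Y, fun ℓ _ => hY ℓ, fun ℓ ℓ' k k' _ _ => hdisj ℓ ℓ' k k', measure_mono_null ?_ hper⟩
  exact hcompl.subset.trans fun _ ⟨n, hn, _, hx⟩ => ⟨n, hn, hx⟩
end

section
/- For every integer d ≥ 2 there exists a dense G_δ subset 𝒢 of GL(d,ℝ) × GL(d,ℝ) such that for every pair (B, B′) ∈ 𝒢 there is no Borel probability measure μ on the real projective space P(ℝ^d) satisfying both B_*μ = μ and B′_*μ = μ, where T_* denotes the push-forward of measures under the homeomorphism of P(ℝ^d) induced by an invertible linear map T. -/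
/-!
The generic condition on `(B, C)` is twofold: for all `m, n ≥ 1`, the words `X ^ i * Y * X ^ j` in
`X = B ^ m`, `Y = C ^ n` span all operators, so that `B ^ m` and `C ^ n` have no common nontrivial
invariant subspace; and no nonzero symmetric bilinear form `Q` has the same pull-backs under
`B ^ n * C` and `C * B ^ n` for all `n`, so that `B` and `C` do not both scale a symmetric form.
Each of these countably many conditions is the injectivity of a linear map depending analytically on
`(B, C)`, hence holds on a dense open set as soon as it holds for one pair; the pair
`B = diag(2, 3, 5, …)`, `C` the all-ones matrix satisfies all of them.

Let `μ` be invariant under `B` and `C`. If `μ` charges a proper subspace, Poincaré recurrence makes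
a minimal such subspace periodic under `B` and `C`, which contradicts the first condition. If not,
then by Furstenberg's lemma the group of operators of determinant `±1` preserving `μ` is bounded:
normalising an unbounded sequence would produce a nonzero singular limit, whose range would carry
`μ`. A bounded group preserves an inner product, which `B` and `C` then scale, against the second
condition.
-/

open MeasureTheory

/-- The quotient topology on the projectivization of a topological vector space. -/
instance projectivizationTopology {K V : Type*} [DivisionRing K] [AddCommGroup V] [Module K V]
    [TopologicalSpace V] : TopologicalSpace (Projectivization K V) :=
  inferInstanceAs (TopologicalSpace (Quotient (projectivizationSetoid K V)))

/-- The Borel σ-algebra on the projectivization. -/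
instance projectivizationMeasurableSpace {K V : Type*} [DivisionRing K] [AddCommGroup V]
    [Module K V] [TopologicalSpace V] : MeasurableSpace (Projectivization K V) :=
  borel _

/-- The homeomorphism of projective space induced by an invertible linear map. -/
noncomputable def projectiveMap {d : ℕ}
    (B : (EuclideanSpace ℝ (Fin d) →L[ℝ] EuclideanSpace ℝ (Fin d))ˣ) :
    Projectivization ℝ (EuclideanSpace ℝ (Fin d)) →
      Projectivization ℝ (EuclideanSpace ℝ (Fin d)) :=
  Projectivization.map
    ((B : EuclideanSpace ℝ (Fin d) →L[ℝ] EuclideanSpace ℝ (Fin d)).toLinearMap)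
    (by
      intro x y hxy
      have h2 : ∀ v : EuclideanSpace ℝ (Fin d),
          (↑B⁻¹ : EuclideanSpace ℝ (Fin d) →L[ℝ] EuclideanSpace ℝ (Fin d))
            ((↑B : EuclideanSpace ℝ (Fin d) →L[ℝ] EuclideanSpace ℝ (Fin d)) v) = v := by
        intro v
        rw [← ContinuousLinearMap.mul_apply, Units.inv_mul, ContinuousLinearMap.one_apply]
      have hxy' : (↑B : EuclideanSpace ℝ (Fin d) →L[ℝ] EuclideanSpace ℝ (Fin d)) x
          = (↑B : EuclideanSpace ℝ (Fin d) →L[ℝ] EuclideanSpace ℝ (Fin d)) y := hxy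
      calc x = _ := (h2 x).symm
        _ = _ := by rw [hxy']
        _ = y := h2 y)

open Filter Polynomial Topology
open scoped LinearAlgebra.Projectivization

/-! ### Power sums -/

lemma sum_fiber_eq_zero_of_forall_sum_mul_pow_eq_zero {R ι : Type*} [CommRing R] [IsDomain R]
    [DecidableEq R] [Fintype ι] {a y : ι → R}
    (h : ∀ n < Fintype.card ι, ∑ i, a i * y i ^ n = 0) (c : R) :
    ∑ i with y i = c, a i = 0 := by
  rcases Finset.eq_empty_or_nonempty {i | y i = c} with hc | hc
  · rw [hc, Finset.sum_empty]
  let s := (Finset.univ.image y).erase c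
  let p : R[X] := ∏ x ∈ s, (X - C x)
  have hdeg : p.natDegree < Fintype.card ι := by
    obtain ⟨i, hi⟩ := hc
    have hmem : c ∈ Finset.univ.image y := Finset.mem_image.2 ⟨i, by simpa using hi⟩
    calc p.natDegree = s.card := by simp [p, natDegree_finsetProd_X_sub_C_eq_card]
      _ < (Finset.univ.image y).card := Finset.card_erase_lt_of_mem hmem
      _ ≤ Fintype.card ι := Finset.card_image_le
  have hp : ∀ i, y i ≠ c → p.eval (y i) = 0 := fun i hi => by
    rw [eval_prod]
    exact Finset.prod_eq_zero (i := y i) (by simp [s, hi]) (by simp)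
  have hpc : p.eval c ≠ 0 := by
    rw [eval_prod]
    exact Finset.prod_ne_zero_iff.2 fun x hx => by
      simpa [sub_eq_zero] using (Finset.ne_of_mem_erase hx).symm
  refine (mul_eq_zero.1 ?_).resolve_right hpc
  calc (∑ i with y i = c, a i) * p.eval c = ∑ i with y i = c, a i * p.eval (y i) := by
        rw [Finset.sum_mul]
        exact Finset.sum_congr rfl fun i hi => by rw [(Finset.mem_filter.1 hi).2]
    _ = ∑ i, a i * p.eval (y i) := Finset.sum_filter_of_ne fun i _ hi => by
        by_contra hne
        exact hi (by rw [hp i hne, mul_zero])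
    _ = ∑ n ∈ Finset.range (Fintype.card ι), p.coeff n * ∑ i, a i * y i ^ n := by
        simp_rw [eval_eq_sum_range' hdeg, Finset.mul_sum]
        rw [Finset.sum_comm]
        exact Finset.sum_congr rfl fun n _ => Finset.sum_congr rfl fun i _ => by ring
    _ = 0 := Finset.sum_eq_zero fun n hn => by rw [h n (Finset.mem_range.1 hn), mul_zero]

lemma eq_zero_of_forall_sum_mul_pow_eq_zero_of_injective_mul {R ι : Type*} [CommRing R] [IsDomain R]
    [CharZero R] [Fintype ι] {x : ι → R} (hx : Function.Injective fun z : Sym2 ι => (z.map x).mul)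
    {Q : ι → ι → R} (hQ : ∀ s t, Q s t = Q t s)
    (h : ∀ n < Fintype.card (ι × ι), ∑ z : ι × ι, Q z.1 z.2 * (x z.1 * x z.2) ^ n = 0) :
    Q = 0 := by
  classical
  ext k l
  let fiber : Finset (ι × ι) := {z | x z.1 * x z.2 = x k * x l}
  have hfiber : ∀ z ∈ fiber, Q z.1 z.2 = Q k l := fun z hz => by
    have hz' : s(z.1, z.2) = s(k, l) := hx (Finset.mem_filter.1 hz).2
    rcases Sym2.eq_iff.1 hz' with ⟨h₁, h₂⟩ | ⟨h₁, h₂⟩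
    · rw [h₁, h₂]
    · rw [h₁, h₂, hQ]
  have hsum : fiber.card • Q k l = 0 := by
    rw [← Finset.sum_eq_card_nsmul hfiber]
    exact sum_fiber_eq_zero_of_forall_sum_mul_pow_eq_zero h (x k * x l)
  exact (smul_eq_zero.1 hsum).resolve_left
    (Finset.card_ne_zero_of_mem (a := (k, l)) (by simp [fiber]))

/-! ### Generic injectivity of analytic families of linear maps -/

lemma dense_setOf_ne_zero_of_analyticOnNhd {P F : Type*} [NormedAddCommGroup P] [NormedSpace ℝ P]
    [NormedAddCommGroup F] [NormedSpace ℝ F] {f : P → F} (hf : AnalyticOnNhd ℝ f Set.univ) {p₁ : P}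
    (h₁ : f p₁ ≠ 0) : Dense {p | f p ≠ 0} := by
  change Dense {p | f p = 0}ᶜ
  rw [← interior_eq_empty_iff_dense_compl, Set.eq_empty_iff_forall_notMem]
  exact fun p hp => h₁ <| hf.eqOn_zero_of_preconnected_of_eventuallyEq_zero isPreconnected_univ
    (Set.mem_univ p) (mem_interior_iff_mem_nhds.1 hp) (Set.mem_univ p₁)

lemma analyticAt_continuousLinearMap_det {𝕜 F : Type*} [NontriviallyNormedField 𝕜] [CompleteSpace 𝕜]
    [NormedAddCommGroup F] [NormedSpace 𝕜 F] [FiniteDimensional 𝕜 F] (T : F →L[𝕜] F) :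
    AnalyticAt 𝕜 (fun T : F →L[𝕜] F => T.det) T := by
  let b := Module.finBasis 𝕜 F
  let entry (i j) : (F →L[𝕜] F) →L[𝕜] 𝕜 :=
    (b.coord i).toContinuousLinearMap ∘L ContinuousLinearMap.apply 𝕜 F (b j)
  have hdet : ∀ T : F →L[𝕜] F,
      T.det = ∑ σ : Equiv.Perm (Fin (Module.finrank 𝕜 F)), (σ.sign : 𝕜) * ∏ i, entry (σ i) i T :=
    fun T => by
      rw [ContinuousLinearMap.det, ← LinearMap.det_toMatrix b, Matrix.det_apply']
      simp [entry, LinearMap.toMatrix_apply]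
  simp only [hdet]
  exact Finset.analyticAt_fun_sum _ fun σ _ => analyticAt_const.mul <|
    Finset.analyticAt_fun_prod _ fun i _ => (entry (σ i) i).analyticAt T

section AnalyticFamily

variable {F G P : Type*} [NormedAddCommGroup F] [NormedSpace ℝ F] [FiniteDimensional ℝ F]
  [NormedAddCommGroup G] [NormedSpace ℝ G] [NormedAddCommGroup P] [NormedSpace ℝ P]

lemma eventually_residual_injective {L : P → F →L[ℝ] G} (hL : AnalyticOnNhd ℝ L Set.univ) {p₁ : P}
    (h₁ : Function.Injective (L p₁)) : ∀ᶠ p in residual P, Function.Injective (L p) := by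
  let e := (LinearEquiv.ofInjective (L p₁ : F →ₗ[ℝ] G) h₁).toContinuousLinearEquiv
  obtain ⟨R, hR⟩ := (e.symm : (L p₁).range →L[ℝ] F).exist_extension_of_finiteDimensional_range
  have hR₁ : R ∘L L p₁ = .id ℝ F := by
    ext v
    exact (DFunLike.congr_fun hR (e v)).symm.trans (e.symm_apply_apply v)
  let f : P → ℝ := fun p => (R ∘L L p).det
  have hf : AnalyticOnNhd ℝ f Set.univ := fun p hp =>
    (analyticAt_continuousLinearMap_det _).comp (f := fun p => R ∘L L p)
      (((ContinuousLinearMap.compL ℝ F G F R).analyticAt _).comp (hL p hp))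
  have hf₁ : f p₁ = 1 := by
    simp only [f, hR₁]
    exact LinearMap.det_id
  have hinj : ∀ p, f p ≠ 0 → Function.Injective (L p) := fun p hp =>
    Function.Injective.of_comp (f := R) (LinearMap.equivOfDetNeZero _ hp).injective
  exact residual_of_dense_open (ContinuousLinearMap.isOpen_injective.preimage hL.continuous)
    ((dense_setOf_ne_zero_of_analyticOnNhd hf (hf₁.trans_ne one_ne_zero)).mono hinj)

lemma eventually_residual_forall_eq_zero {ι : Type*} [Finite ι] {L : P → ι → F →L[ℝ] G}
    (hL : ∀ i, AnalyticOnNhd ℝ (L · i) Set.univ) {p₁ : P}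
    (h₁ : ∀ v, (∀ i, L p₁ i v = 0) → v = 0) :
    ∀ᶠ p in residual P, ∀ v, (∀ i, L p i v = 0) → v = 0 := by
  classical
  have := Fintype.ofFinite ι
  let M : P → F →L[ℝ] ι → G := fun p => ∑ i, ContinuousLinearMap.single ℝ (fun _ => G) i ∘L L p i
  have hM : AnalyticOnNhd ℝ M Set.univ := Finset.analyticOnNhd_fun_sum _ fun i _ p hp =>
    (ContinuousLinearMap.analyticAt (ContinuousLinearMap.compL ℝ F G (ι → G)
      (ContinuousLinearMap.single ℝ (fun _ => G) i)) _).comp (hL i p hp)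
  have hM_apply : ∀ p v, M p v = fun i => L p i v := fun p v => by
    simpa [M] using Finset.univ_sum_single fun i => L p i v
  have hiff : ∀ p, (∀ v, (∀ i, L p i v = 0) → v = 0) ↔ Function.Injective (M p) := fun p => by
    simp [injective_iff_map_eq_zero, hM_apply, funext_iff]
  simp only [hiff] at h₁ ⊢
  exact eventually_residual_injective hM h₁

lemma eventually_residual_linearIndependent {ι : Type*} [Finite ι] {v : P → ι → G}
    (hv : ∀ i, AnalyticOnNhd ℝ (v · i) Set.univ) {p₁ : P} (h₁ : LinearIndependent ℝ (v p₁)) :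
    ∀ᶠ p in residual P, LinearIndependent ℝ (v p) := by
  have := Fintype.ofFinite ι
  let L : P → (ι → ℝ) →L[ℝ] G := fun p =>
    ∑ i, ContinuousLinearMap.smulRightL ℝ (ι → ℝ) G (.proj i) (v p i)
  have hL : AnalyticOnNhd ℝ L Set.univ := Finset.analyticOnNhd_fun_sum _ fun i _ p hp =>
    (ContinuousLinearMap.analyticAt _ _).comp (hv i p hp)
  have hiff : ∀ p, LinearIndependent ℝ (v p) ↔ Function.Injective (L p) := fun p => by
    simp [Fintype.linearIndependent_iff, injective_iff_map_eq_zero, L, funext_iff]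
  simp only [hiff] at h₁ ⊢
  exact eventually_residual_injective hL h₁

end AnalyticFamily

/-! ### The test pair -/

/-- The words `X ^ i * Y * X ^ j` with `i, j < d`. For operators of a `d`-dimensional space there
are as many of them as the dimension of the space of operators. -/
def words {M : Type*} [Monoid M] (d : ℕ) (X Y : M) (ij : Fin d × Fin d) : M :=
  X ^ (ij.1 : ℕ) * Y * X ^ (ij.2 : ℕ)

lemma linearIndependent_words_diagonal {K : Type*} [Field K] {d : ℕ}
    {y : Fin d → K} (hy : Function.Injective y) {Y : Matrix (Fin d) (Fin d) K}
    (hY : ∀ s t, Y s t ≠ 0) : LinearIndependent K (words d (Matrix.diagonal y) Y) := by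
  rw [Fintype.linearIndependent_iff]
  intro c hc ⟨i, j⟩
  have hst : ∀ s t, ∑ i, ∑ j, c (i, j) * y t ^ (j : ℕ) * y s ^ (i : ℕ) = 0 := fun s t => by
    refine (mul_eq_zero.1 ?_).resolve_right (hY s t)
    have := congrFun (congrFun hc s) t
    simp only [words, Matrix.diagonal_pow, Fintype.sum_prod_type, Matrix.sum_apply,
      Matrix.smul_apply, Matrix.mul_diagonal, Matrix.diagonal_mul, smul_eq_mul, Pi.pow_apply,
      Matrix.zero_apply] at this
    rw [← this, Finset.sum_mul]
    refine Finset.sum_congr rfl fun i _ => ?_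
    rw [Finset.sum_mul]
    exact Finset.sum_congr rfl fun j _ => by ring
  have hrow : ∀ t, (fun i => ∑ j, c (i, j) * y t ^ (j : ℕ)) = 0 := fun t =>
    Matrix.eq_zero_of_forall_index_sum_mul_pow_eq_zero hy fun s => by
      simpa only [Finset.sum_mul] using hst s t
  have hcol : (fun j => c (i, j)) = 0 :=
    Matrix.eq_zero_of_forall_index_sum_mul_pow_eq_zero hy fun t => congrFun (hrow t) i
  exact congrFun hcol j

lemma matrix_pow_apply_pos {R n : Type*} [Semiring R] [PartialOrder R] [IsStrictOrderedRing R]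
    [Fintype n] [DecidableEq n] {A : Matrix n n R} (hA : ∀ i j, 0 < A i j) {k : ℕ} (hk : k ≠ 0)
    (i j : n) : 0 < (A ^ k) i j := by
  induction k, Nat.one_le_iff_ne_zero.2 hk using Nat.le_induction generalizing i j with
  | base => simpa using hA i j
  | succ k hk ih =>
    rw [pow_succ, Matrix.mul_apply]
    exact Finset.sum_pos (fun l _ => mul_pos (ih (by omega) i l) (hA l j)) ⟨i, Finset.mem_univ i⟩

lemma injective_mul_map_nth_prime :
    Function.Injective fun z : Sym2 ℕ => (z.map (Nat.nth Nat.Prime)).mul := by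
  intro z w h
  refine Sym2.map.injective (Nat.nth_injective Nat.infinite_setOfPred_prime) ?_
  induction z with | _ i j
  induction w with | _ k l
  have hp := fun n => Nat.prime_nth_prime n
  have h' := congrArg Nat.factorization h
  simp only [Sym2.map_mk, Sym2.mul_mk, Nat.factorization_mul (hp _).ne_zero (hp _).ne_zero,
    (hp _).factorization] at h'
  rw [Finsupp.single_add_single_eq_single_add_single one_ne_zero one_ne_zero] at h'
  simp only [Sym2.map_mk, Sym2.eq_iff]
  grind

/-- The diagonal entries `2, 3, 5, …` of a test operator: the products of two of them determine
the factors. -/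
noncomputable def primeDiagonal (d : ℕ) (i : Fin d) : ℝ := Nat.nth Nat.Prime i

lemma injective_mul_map_primeDiagonal (d : ℕ) :
    Function.Injective fun z : Sym2 (Fin d) => (z.map (primeDiagonal d)).mul := by
  intro z w h
  refine Sym2.map.injective Fin.val_injective (injective_mul_map_nth_prime ?_)
  induction z with | _ i j
  induction w with | _ k l
  simp only [Sym2.map_mk, Sym2.mul_mk, primeDiagonal] at h ⊢
  exact_mod_cast h

lemma injective_primeDiagonal (d : ℕ) : Function.Injective (primeDiagonal d) := fun i j h => by
  have := injective_mul_map_primeDiagonal d (a₁ := s(i, i)) (a₂ := s(j, j)) (by simp [h])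
  simpa using this

lemma primeDiagonal_pos {d : ℕ} (i : Fin d) : 0 < primeDiagonal d i :=
  Nat.cast_pos.2 (Nat.prime_nth_prime i).pos

section TestPair

variable {E : Type*} [NormedAddCommGroup E] [NormedSpace ℝ E] [FiniteDimensional ℝ E]

/-- The operator with a given matrix in the basis `Module.finBasis ℝ E`. -/
noncomputable def operatorOfMatrix (E : Type*) [NormedAddCommGroup E] [NormedSpace ℝ E]
    [FiniteDimensional ℝ E] :
    Matrix (Fin (Module.finrank ℝ E)) (Fin (Module.finrank ℝ E)) ℝ ≃ₐ[ℝ] (E →L[ℝ] E) :=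
  (LinearMap.toMatrixAlgEquiv (Module.finBasis ℝ E)).symm.trans (Module.End.toContinuousLinearMap E)

lemma operatorOfMatrix_finBasis
    (M : Matrix (Fin (Module.finrank ℝ E)) (Fin (Module.finrank ℝ E)) ℝ)
    (i : Fin (Module.finrank ℝ E)) :
    operatorOfMatrix E M (Module.finBasis ℝ E i) = ∑ j, M j i • Module.finBasis ℝ E j :=
  Matrix.toLin_self _ _ M i

variable (E) in
/-- The operator `diag(2, 3, 5, …)` in the basis `Module.finBasis ℝ E`; with `onesTest` it is the
pair at which the analytic conditions are verified. -/
noncomputable def diagonalTest : E →L[ℝ] E :=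
  operatorOfMatrix E (Matrix.diagonal (primeDiagonal _))

variable (E) in
/-- The operator whose matrix in the basis `Module.finBasis ℝ E` has all entries `1`; see
`diagonalTest`. -/
noncomputable def onesTest : E →L[ℝ] E := operatorOfMatrix E (Matrix.of fun _ _ => 1)

lemma diagonalTest_finBasis (i : Fin (Module.finrank ℝ E)) :
    diagonalTest E (Module.finBasis ℝ E i) = primeDiagonal _ i • Module.finBasis ℝ E i := by
  simp [diagonalTest, operatorOfMatrix_finBasis, Matrix.diagonal_apply, ite_smul]

lemma diagonalTest_pow_finBasis (n : ℕ) (i : Fin (Module.finrank ℝ E)) :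
    (diagonalTest E ^ n) (Module.finBasis ℝ E i) =
      primeDiagonal _ i ^ n • Module.finBasis ℝ E i := by
  induction n with
  | zero => simp
  | succ n ih => rw [pow_succ, mul_apply_eq_comp, diagonalTest_finBasis, map_smul, ih,
      smul_smul, pow_succ']

lemma onesTest_finBasis (i : Fin (Module.finrank ℝ E)) :
    onesTest E (Module.finBasis ℝ E i) = ∑ j, Module.finBasis ℝ E j := by
  simp [onesTest, operatorOfMatrix_finBasis]

lemma linearIndependent_words_test {m n : ℕ} (hm : m ≠ 0) (hn : n ≠ 0) :
    LinearIndependent ℝ (words (Module.finrank ℝ E) (diagonalTest E ^ m) (onesTest E ^ n)) := by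
  have h : LinearIndependent ℝ (words (Module.finrank ℝ E)
      (Matrix.diagonal (primeDiagonal (Module.finrank ℝ E) ^ m))
      ((Matrix.of fun _ _ => 1) ^ n)) :=
    linearIndependent_words_diagonal
      (fun i j hij => injective_primeDiagonal _ <|
        (pow_left_inj₀ (primeDiagonal_pos i).le (primeDiagonal_pos j).le hm).1 hij)
      (fun s t => (matrix_pow_apply_pos (fun _ _ => one_pos) hn s t).ne')
  have hwords : words (Module.finrank ℝ E) (diagonalTest E ^ m) (onesTest E ^ n) =
      (operatorOfMatrix E).toLinearMap ∘ words (Module.finrank ℝ E)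
        (Matrix.diagonal (primeDiagonal (Module.finrank ℝ E) ^ m))
        ((Matrix.of fun _ _ => 1) ^ n) :=
    funext fun ij => by simp [words, diagonalTest, onesTest, ← Matrix.diagonal_pow]
  rw [hwords]
  exact h.map' _ (LinearMap.ker_eq_bot.2 (operatorOfMatrix E).injective)

lemma eventually_residual_linearIndependent_words {m n : ℕ} (hm : m ≠ 0) (hn : n ≠ 0) :
    ∀ᶠ p : (E →L[ℝ] E) × (E →L[ℝ] E) in residual _,
      LinearIndependent ℝ (words (Module.finrank ℝ E) (p.1 ^ m) (p.2 ^ n)) :=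
  eventually_residual_linearIndependent
    (fun _ _ _ => (((analyticAt_fst.pow _).pow _).mul (analyticAt_snd.pow _)).mul
      ((analyticAt_fst.pow _).pow _))
    (p₁ := (diagonalTest E, onesTest E)) (linearIndependent_words_test hm hn)

lemma eq_bot_or_eq_top_of_linearIndependent_words {X Y : E →L[ℝ] E}
    (h : LinearIndependent ℝ (words (Module.finrank ℝ E) X Y)) {V : Submodule ℝ E}
    (hX : Set.MapsTo X V V) (hY : Set.MapsTo Y V V) : V = ⊥ ∨ V = ⊤ := by
  have hspan : Submodule.span ℝ (Set.range (words (Module.finrank ℝ E) X Y)) = ⊤ :=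
    h.span_eq_top_of_card_eq_finrank' <| by
      rw [← LinearMap.toContinuousLinearMap.finrank_eq, Module.finrank_linearMap]
      simp
  have hV : ∀ T : E →L[ℝ] E, Set.MapsTo T V V := by
    have hpow : ∀ i, Set.MapsTo ⇑(X ^ i) V V := fun i => by
      simpa only [FunLike.coe_pow_eq_iterate] using hX.iterate i
    have hwords : Submodule.span ℝ (Set.range (words (Module.finrank ℝ E) X Y)) ≤
        (V.compatibleMaps V).comap (ContinuousLinearMap.coeLM ℝ) := by
      rw [Submodule.span_le]
      rintro _ ⟨ij, rfl⟩ v hv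
      exact hpow _ (hY (hpow _ hv))
    exact fun T v hv => hwords (hspan ▸ Submodule.mem_top (x := T)) hv
  rw [or_iff_not_imp_left]
  intro hbot
  obtain ⟨v, hv, hv₀⟩ := V.ne_bot_iff.1 hbot
  refine V.eq_top_iff'.2 fun u => ?_
  obtain ⟨T, rfl⟩ : ∃ T : E →L[ℝ] E, T v = u := by
    obtain ⟨f, hf⟩ := SeparatingDual.exists_eq_one (R := ℝ) hv₀
    exact ⟨f.smulRight u, by simp [hf]⟩
  exact hV T hv

end TestPair

/-! ### Pull-backs of bilinear forms -/

section Pullback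

set_option maxSynthPendingDepth 3

variable {E : Type*} [NormedAddCommGroup E] [NormedSpace ℝ E]

/-- The pull-back `Q(T ·, T ·)` of a bilinear form `Q` under an operator `T`, as a function
of `Q`. -/
noncomputable def pullback (T : E →L[ℝ] E) : (E →L[ℝ] E →L[ℝ] ℝ) →L[ℝ] E →L[ℝ] E →L[ℝ] ℝ :=
  ContinuousLinearMap.compL ℝ E (E →L[ℝ] ℝ) (E →L[ℝ] ℝ)
      ((ContinuousLinearMap.compL ℝ E E ℝ).flip T) ∘L
    (ContinuousLinearMap.compL ℝ E E (E →L[ℝ] ℝ)).flip T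

@[simp]
lemma pullback_apply (T : E →L[ℝ] E) (Q : E →L[ℝ] E →L[ℝ] ℝ) (v w : E) :
    pullback T Q v w = Q (T v) (T w) := rfl

lemma pullback_one : pullback (1 : E →L[ℝ] E) = 1 := rfl

lemma pullback_mul (S T : E →L[ℝ] E) : pullback (S * T) = pullback T * pullback S := rfl

lemma pullback_smul (c : ℝ) (T : E →L[ℝ] E) (Q : E →L[ℝ] E →L[ℝ] ℝ) :
    pullback (c • T) Q = c ^ 2 • pullback T Q := by
  ext v w
  simp [sq, mul_assoc]

lemma analyticOnNhd_pullback : AnalyticOnNhd ℝ (pullback (E := E)) Set.univ := fun T _ =>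
  (ContinuousLinearMap.compL ℝ _ _ _).analyticAt_bilinear _ |>.comp₂
    (((ContinuousLinearMap.compL ℝ E (E →L[ℝ] ℝ) (E →L[ℝ] ℝ)) ∘L
      (ContinuousLinearMap.compL ℝ E E ℝ).flip).analyticAt T)
    ((ContinuousLinearMap.compL ℝ E E (E →L[ℝ] ℝ)).flip.analyticAt T)

variable [FiniteDimensional ℝ E]

lemma pullback_diagonalTest_pow_mul_onesTest (Q : E →L[ℝ] E →L[ℝ] ℝ) (n : ℕ)
    (k l : Fin (Module.finrank ℝ E)) :
    pullback (diagonalTest E ^ n * onesTest E) Q (Module.finBasis ℝ E k) (Module.finBasis ℝ E l) =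
      ∑ z : Fin (Module.finrank ℝ E) × Fin (Module.finrank ℝ E),
        Q (Module.finBasis ℝ E z.1) (Module.finBasis ℝ E z.2) *
          (primeDiagonal _ z.1 * primeDiagonal _ z.2) ^ n := by
  simp only [pullback_apply, mul_apply_eq_comp, onesTest_finBasis, map_sum,
    diagonalTest_pow_finBasis, map_smul, sum_apply, smul_apply, smul_eq_mul, Fintype.sum_prod_type,
    Finset.mul_sum]
  rw [Finset.sum_comm]
  exact Finset.sum_congr rfl fun s _ => Finset.sum_congr rfl fun t _ => by ring

lemma pullback_onesTest_mul_diagonalTest_pow (Q : E →L[ℝ] E →L[ℝ] ℝ) (n : ℕ)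
    (k l : Fin (Module.finrank ℝ E)) :
    pullback (onesTest E * diagonalTest E ^ n) Q (Module.finBasis ℝ E k) (Module.finBasis ℝ E l) =
      (primeDiagonal _ k * primeDiagonal _ l) ^ n *
        ∑ z : Fin (Module.finrank ℝ E) × Fin (Module.finrank ℝ E),
          Q (Module.finBasis ℝ E z.1) (Module.finBasis ℝ E z.2) := by
  simp only [pullback_apply, mul_apply_eq_comp, onesTest_finBasis, map_sum,
    diagonalTest_pow_finBasis, map_smul, sum_apply, smul_apply, smul_eq_mul, Fintype.sum_prod_type,
    Finset.mul_sum]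
  rw [Finset.sum_comm]
  exact Finset.sum_congr rfl fun s _ => Finset.sum_congr rfl fun t _ => by ring

lemma eq_zero_of_pullback_test_eq (hE : 2 ≤ Module.finrank ℝ E) {Q : E →L[ℝ] E →L[ℝ] ℝ}
    (hsymm : Q.flip = Q)
    (hQ : ∀ n < Module.finrank ℝ E ^ 2, pullback (diagonalTest E ^ n * onesTest E) Q =
      pullback (onesTest E * diagonalTest E ^ n) Q) : Q = 0 := by
  let b := Module.finBasis ℝ E
  let x := primeDiagonal (Module.finrank ℝ E)
  let D := ∑ z : Fin (Module.finrank ℝ E) × Fin (Module.finrank ℝ E), Q (b z.1) (b z.2)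
  have hsum : ∀ n < Module.finrank ℝ E ^ 2, ∀ k l,
      ∑ z : Fin (Module.finrank ℝ E) × Fin (Module.finrank ℝ E),
        Q (b z.1) (b z.2) * (x z.1 * x z.2) ^ n = (x k * x l) ^ n * D := fun n hn k l => by
    rw [← pullback_diagonalTest_pow_mul_onesTest Q n k l, hQ n hn,
      pullback_onesTest_mul_diagonalTest_pow]
  let i₀ : Fin (Module.finrank ℝ E) := ⟨0, by lia⟩
  let i₁ : Fin (Module.finrank ℝ E) := ⟨1, by lia⟩
  have hD₀ : D = 0 := by
    have h₁ : 1 < Module.finrank ℝ E ^ 2 := Nat.one_lt_pow two_ne_zero hE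
    have hx : x i₀ ^ 2 ≠ x i₁ ^ 2 := fun h => zero_ne_one <| congrArg Fin.val <|
      injective_primeDiagonal _ <|
        (pow_left_inj₀ (primeDiagonal_pos i₀).le (primeDiagonal_pos i₁).le two_ne_zero).1 h
    have h := (hsum 1 h₁ i₀ i₀).symm.trans (hsum 1 h₁ i₁ i₁)
    simp only [pow_one, ← sq] at h
    exact (mul_eq_mul_right_iff.1 h).resolve_left hx
  have hb : (fun k l => Q (b k) (b l)) = 0 :=
    eq_zero_of_forall_sum_mul_pow_eq_zero_of_injective_mul (injective_mul_map_primeDiagonal _)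
      (fun s t => DFunLike.congr_fun (DFunLike.congr_fun hsymm (b t)) (b s)) fun n hn => by
        rw [hsum n (by simpa [sq] using hn) i₀ i₀, hD₀, mul_zero]
  exact ContinuousLinearMap.coe_injective <| b.ext fun k =>
    ContinuousLinearMap.coe_injective <| b.ext fun l => congrFun (congrFun hb k) l

lemma eventually_residual_symmetric_form_eq_zero (hE : 2 ≤ Module.finrank ℝ E) :
    ∀ᶠ p : (E →L[ℝ] E) × (E →L[ℝ] E) in residual _, ∀ Q : E →L[ℝ] E →L[ℝ] ℝ, Q.flip = Q →
      (∀ n, pullback (p.1 ^ n * p.2) Q = pullback (p.2 * p.1 ^ n) Q) → Q = 0 := by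
  let flip : (E →L[ℝ] E →L[ℝ] ℝ) →L[ℝ] E →L[ℝ] E →L[ℝ] ℝ :=
    (ContinuousLinearMap.flipₗᵢ ℝ E E ℝ).toContinuousLinearEquiv
  let L (p : (E →L[ℝ] E) × (E →L[ℝ] E)) :
      Option (Fin (Module.finrank ℝ E ^ 2)) → (E →L[ℝ] E →L[ℝ] ℝ) →L[ℝ] E →L[ℝ] E →L[ℝ] ℝ
    | none => flip - .id ℝ _
    | some n => pullback (p.1 ^ (n : ℕ) * p.2) - pullback (p.2 * p.1 ^ (n : ℕ))
  have hL : ∀ o, AnalyticOnNhd ℝ (L · o) Set.univ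
    | none => analyticOnNhd_const
    | some n => fun p _ => AnalyticAt.sub
        ((analyticOnNhd_pullback _ trivial).comp ((analyticAt_fst.pow _).mul analyticAt_snd))
        ((analyticOnNhd_pullback _ trivial).comp (analyticAt_snd.mul (analyticAt_fst.pow _)))
  have hker : ∀ p Q, (∀ o, L p o Q = 0) ↔ Q.flip = Q ∧ ∀ n < Module.finrank ℝ E ^ 2,
      pullback (p.1 ^ n * p.2) Q = pullback (p.2 * p.1 ^ n) Q := fun p Q => by
    simp [L, flip, Option.forall, Fin.forall_iff, sub_eq_zero]
  have h := eventually_residual_forall_eq_zero hL (p₁ := (diagonalTest E, onesTest E)) fun Q hQ =>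
    have ⟨hsymm, hn⟩ := (hker _ Q).1 hQ
    eq_zero_of_pullback_test_eq hE hsymm hn
  filter_upwards [h] with p hp Q hsymm hQ
  exact hp Q ((hker p Q).2 ⟨hsymm, fun n _ => hQ n⟩)

lemma eventually_residual_no_common_conformal_form (hE : 2 ≤ Module.finrank ℝ E) :
    ∀ᶠ p : (E →L[ℝ] E) × (E →L[ℝ] E) in residual _, ∀ (Q : E →L[ℝ] E →L[ℝ] ℝ) (r t : ℝ),
      Q.flip = Q → pullback p.1 Q = r • Q → pullback p.2 Q = t • Q → Q = 0 := by
  filter_upwards [eventually_residual_symmetric_form_eq_zero hE] with p hp Q r t hsymm h₁ h₂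
  have hpow : ∀ n : ℕ, pullback (p.1 ^ n) Q = r ^ n • Q := fun n => by
    induction n with
    | zero => simp [pullback_one]
    | succ n ih => rw [pow_succ, pullback_mul, mul_apply_eq_comp, ih, map_smul, h₁, smul_smul,
        pow_succ]
  refine hp Q hsymm fun n => ?_
  rw [pullback_mul, pullback_mul, mul_apply_eq_comp, mul_apply_eq_comp, hpow, h₂, map_smul,
    map_smul, h₂, hpow, smul_comm]

end Pullback

/-! ### Projective actions and Poincaré recurrence -/

section ProjectiveAction

variable {K V G : Type*} [DivisionRing K] [AddCommGroup V] [Module K V] [TopologicalSpace V]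

instance borelSpace_projectivization : BorelSpace (ℙ K V) := ⟨rfl⟩

lemma isQuotientMap_projectivization_mk :
    IsQuotientMap fun v : {v : V // v ≠ 0} => Projectivization.mk K v.1 v.2 :=
  isQuotientMap_quot_mk

lemma isClosed_projectivization {W : Submodule K V} (hW : IsClosed (W : Set V)) :
    IsClosed (W.projectivization : Set (ℙ K V)) :=
  isQuotientMap_projectivization_mk.isClosed_preimage.1 (hW.preimage continuous_subtype_val)

variable [Group G] [DistribMulAction G V] [SMulCommClass G K V]

instance continuousConstSMul_projectivization [ContinuousConstSMul G V] :
    ContinuousConstSMul G (ℙ K V) where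
  continuous_const_smul g := isQuotientMap_projectivization_mk.continuous_iff.2 <|
    isQuotientMap_projectivization_mk.continuous.comp <|
      (continuous_subtype_val.const_smul g).subtype_mk fun v => (smul_ne_zero_iff_ne g).2 v.2

/-- Poincaré recurrence, applied to a minimal subspace charged by `μ`. -/
lemma exists_periodic_submodule [IsArtinian K V] {μ : Measure (ℙ K V)} [IsFiniteMeasure μ]
    (hclosed : ∀ W : Submodule K V, IsClosed (W : Set V)) {W : Submodule K V} (hW : W ≠ ⊤)
    (hμW : μ W.projectivization ≠ 0) :
    ∃ U : Submodule K V, U ≠ ⊥ ∧ U ≠ ⊤ ∧ ∀ g : G, MeasurePreserving (g • ·) μ μ →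
      ∃ n ≠ 0, Set.MapsTo (g ^ n • · : V → V) U U := by
  obtain ⟨U, ⟨hUtop, hμU⟩, hmin⟩ := exists_minimal_of_wellFoundedLT
    (fun U : Submodule K V => U ≠ ⊤ ∧ μ U.projectivization ≠ 0) ⟨W, hW, hμW⟩
  refine ⟨U, ?_, hUtop, fun g hg => ?_⟩
  · rintro rfl
    simp at hμU
  obtain ⟨n, hn, hμn⟩ := hg.conservative.exists_gt_measure_inter_ne_zero
    (isClosed_projectivization (hclosed U)).nullMeasurableSet hμU 0
  let U' : Submodule K V := U ⊓ U.comap (DistribSMul.toLinearMap K V (g ^ n))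
  have hU' : (U.projectivization : Set (ℙ K V)) ∩ (g • ·)^[n] ⁻¹' U.projectivization =
      U'.projectivization := by
    rw [smul_iterate]
    ext ⟨v⟩
    rfl
  have hle : U ≤ U' := hmin ⟨(inf_le_left.trans_lt hUtop.lt_top).ne, hU' ▸ hμn⟩ inf_le_left
  exact ⟨n, hn.ne', fun v hv => (hle hv).2⟩

end ProjectiveAction

/-! ### Furstenberg's lemma -/

lemma ae_eq_const_of_tendsto_comp {α F : Type*} [MeasurableSpace α] {μ : Measure α}
    [IsFiniteMeasure μ] [MetricSpace F] {h : α → F} (hh : AEStronglyMeasurable h μ)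
    {T : ℕ → α → α} (hT : ∀ n, MeasurePreserving (T n) μ μ) {c : F}
    (hc : ∀ᵐ x ∂μ, Tendsto (fun n => h (T n x)) atTop (𝓝 c)) : h =ᵐ[μ] fun _ => c := by
  have hconst : TendstoInMeasure μ (fun _ => h) atTop fun _ => c := fun ε hε => by
    have hlim := tendstoInMeasure_of_tendsto_ae (fun n => hh.comp_measurePreserving (hT n)) hc
    refine (hlim ε hε).congr fun n => ?_
    exact (hT n).measure_preimage <|
      nullMeasurableSet_le aemeasurable_const (hh.edist aestronglyMeasurable_const)
  exact tendstoInMeasure_ae_unique (fun ε hε => by simp [hε.ne']) hconst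

/-- The subgroup of the elements of `G` whose action preserves `μ`. -/
def measurePreservingSubgroup (G : Type*) {α : Type*} [Group G] [MulAction G α] [MeasurableSpace α]
    [MeasurableConstSMul G α] (μ : Measure α) : Subgroup G where
  carrier := {g | MeasurePreserving (g • · : α → α) μ μ}
  mul_mem' {g h} hg hh := by
    change MeasurePreserving ((g * h) • · : α → α) μ μ
    simp only [mul_smul]
    exact hg.comp hh
  one_mem' := by
    change MeasurePreserving ((1 : G) • · : α → α) μ μ
    simp only [one_smul]
    exact .id μ
  inv_mem' {g} hg := MeasurePreserving.symm (MeasurableEquiv.smul g) hg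

section Furstenberg

variable {E : Type*} [NormedAddCommGroup E] [NormedSpace ℝ E]

/-- The function `[v] ↦ |f v| / ‖v‖` on projective space; it vanishes exactly on the projective
hyperplane `f = 0`. -/
noncomputable def height (f : E →L[ℝ] ℝ) : ℙ ℝ E → ℝ :=
  Projectivization.lift (fun v => |f v| / ‖(v : E)‖) fun v w t h => by
    have ht : t ≠ 0 := by
      rintro rfl
      exact v.2 (h.trans (zero_smul ℝ _))
    rw [h, map_smul, smul_eq_mul, abs_mul, norm_smul, Real.norm_eq_abs,
      mul_div_mul_left _ _ (abs_ne_zero.2 ht)]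

lemma height_mk (f : E →L[ℝ] ℝ) {v : E} (hv : v ≠ 0) :
    height f (Projectivization.mk ℝ v hv) = |f v| / ‖v‖ := rfl

lemma height_eq_zero_iff (f : E →L[ℝ] ℝ) (x : ℙ ℝ E) :
    height f x = 0 ↔ x ∈ (LinearMap.ker (f : E →ₗ[ℝ] ℝ)).projectivization := by
  induction x with | _ v hv
  simp [height_mk, hv, Submodule.mk_mem_projectivization_iff]

lemma continuous_height (f : E →L[ℝ] ℝ) : Continuous (height f) :=
  isQuotientMap_projectivization_mk.continuous_iff.2 <|
    (f.continuous.comp continuous_subtype_val).abs.div continuous_subtype_val.norm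
      fun v => norm_ne_zero_iff.2 v.2

/-- A measure on projective space charges no proper subspace if all projective subspaces other than
the whole space are null sets. -/
def ChargesNoProperSubspace (μ : Measure (ℙ ℝ E)) : Prop :=
  ∀ W : Submodule ℝ E, W ≠ ⊤ → μ W.projectivization = 0

lemma ChargesNoProperSubspace.ae_notMem {μ : Measure (ℙ ℝ E)} (hμ : ChargesNoProperSubspace μ)
    {W : Submodule ℝ E} (hW : W ≠ ⊤) : ∀ᵐ x ∂μ, x ∉ W.projectivization :=
  measure_eq_zero_iff_ae_notMem.1 (hμ W hW)

lemma tendsto_height_smul {f : E →L[ℝ] ℝ} {A : E →L[ℝ] E} (hfA : ∀ v, f (A v) = 0)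
    {g : ℕ → (E →L[ℝ] E)ˣ} {c : ℕ → ℝ}
    (hA : Tendsto (fun n => c n • (g n : E →L[ℝ] E)) atTop (𝓝 A)) {x : ℙ ℝ E}
    (hx : x ∉ (LinearMap.ker (A : E →ₗ[ℝ] E)).projectivization) :
    Tendsto (fun n => height f (g n • x)) atTop (𝓝 0) := by
  induction x with | _ v hv
  have hAv : A v ≠ 0 := hx
  have hv_lim : Tendsto (fun n => c n • g n • v) atTop (𝓝 (A v)) :=
    ((ContinuousLinearMap.apply ℝ E v).continuous.tendsto A).comp hA
  have hlim : Tendsto (fun n => |f (c n • g n • v)| / ‖c n • g n • v‖) atTop (𝓝 0) := by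
    have := ((f.continuous.tendsto _).comp hv_lim).abs.div hv_lim.norm (norm_ne_zero_iff.2 hAv)
    rwa [hfA, abs_zero, zero_div] at this
  refine hlim.congr' ?_
  filter_upwards [hv_lim.eventually_ne hAv] with n hn
  rw [Projectivization.smul_mk, height_mk, map_smul, smul_eq_mul, abs_mul, norm_smul,
    Real.norm_eq_abs, mul_div_mul_left _ _ (abs_ne_zero.2 (smul_ne_zero_iff.1 hn).1)]

/-- The absolute value of the determinant, as a character of the general linear group. -/
noncomputable def absDet (E : Type*) [NormedAddCommGroup E] [NormedSpace ℝ E] :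
    (E →L[ℝ] E)ˣ →* ℝ :=
  (absHom : ℝ →*₀ ℝ).toMonoidHom.comp <| LinearMap.det.comp <|
    (ContinuousLinearMap.toLinearMapRingHom : (E →L[ℝ] E) →+* E →ₗ[ℝ] E).toMonoidHom.comp <|
      Units.coeHom _

lemma absDet_apply (g : (E →L[ℝ] E)ˣ) : absDet E g = |(g : E →L[ℝ] E).det| := rfl

variable [FiniteDimensional ℝ E] {μ : Measure (ℙ ℝ E)} [IsFiniteMeasure μ] [NeZero μ]

/-- Furstenberg's lemma: almost every line is attracted to the projective subspace of the range
of `A`, which therefore carries `μ`. -/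
lemma range_eq_top_of_tendsto_smul (hμ : ChargesNoProperSubspace μ) {g : ℕ → (E →L[ℝ] E)ˣ}
    (hg : ∀ n, MeasurePreserving (g n • ·) μ μ) {c : ℕ → ℝ} {A : E →L[ℝ] E} (hA₀ : A ≠ 0)
    (hA : Tendsto (fun n => c n • (g n : E →L[ℝ] E)) atTop (𝓝 A)) :
    LinearMap.range (A : E →ₗ[ℝ] E) = ⊤ := by
  by_contra hrange
  obtain ⟨f, hf₀, hf⟩ := Submodule.exists_le_ker_of_lt_top _ (Ne.lt_top hrange)
  have hkerA : LinearMap.ker (A : E →ₗ[ℝ] E) ≠ ⊤ := fun h =>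
    hA₀ (ContinuousLinearMap.coe_injective (LinearMap.ker_eq_top.1 h))
  have hheight : height f.toContinuousLinearMap =ᵐ[μ] fun _ => 0 :=
    ae_eq_const_of_tendsto_comp (continuous_height _).aestronglyMeasurable hg <|
      (hμ.ae_notMem hkerA).mono fun x => tendsto_height_smul
        (f := f.toContinuousLinearMap) (fun v => hf (LinearMap.mem_range_self _ v)) hA
  have hkerf : LinearMap.ker f ≠ ⊤ := fun h => hf₀ (LinearMap.ker_eq_top.1 h)
  obtain ⟨x, hx, hx'⟩ := (hheight.and (hμ.ae_notMem hkerf)).exists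
  exact hx' ((height_eq_zero_iff _ _).1 hx)

lemma det_eq_zero_of_tendsto_smul [Nontrivial E] {g : ℕ → (E →L[ℝ] E)ˣ}
    (hg : ∀ n, absDet E (g n) = 1) {c : ℕ → ℝ} (hc : Tendsto c atTop (𝓝 0)) {A : E →L[ℝ] E}
    (hA : Tendsto (fun n => c n • (g n : E →L[ℝ] E)) atTop (𝓝 A)) :
    A.det = 0 := by
  have hdet : ∀ n, |(c n • (g n : E →L[ℝ] E)).det| = |c n| ^ Module.finrank ℝ E := fun n => by
    rw [ContinuousLinearMap.det, ContinuousLinearMap.toLinearMap_smul, LinearMap.det_smul, abs_mul,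
      abs_pow, ← ContinuousLinearMap.det, ← absDet_apply, hg, mul_one]
  have hlim := ((ContinuousLinearMap.continuous_det.tendsto A).comp hA).abs.congr hdet
  have := tendsto_nhds_unique hlim (hc.abs.pow _)
  rwa [abs_zero, zero_pow Module.finrank_pos.ne', abs_eq_zero] at this

lemma ChargesNoProperSubspace.exists_norm_le (hμ : ChargesNoProperSubspace μ) :
    ∃ C : ℝ, ∀ g ∈ measurePreservingSubgroup (E →L[ℝ] E)ˣ μ ⊓ (absDet E).ker,
      ‖(g : E →L[ℝ] E)‖ ≤ C := by
  by_contra! hunbounded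
  choose g hg hg_norm using fun n : ℕ => hunbounded n
  let c : ℕ → ℝ := fun n => ‖(g n : E →L[ℝ] E)‖⁻¹
  have hc : Tendsto c atTop (𝓝 0) := Tendsto.inv_tendsto_atTop <|
    tendsto_atTop_mono (fun n => (hg_norm n).le) tendsto_natCast_atTop_atTop
  have hsphere : ∀ n, c n • (g n : E →L[ℝ] E) ∈ Metric.sphere 0 1 := fun n => by
    rw [mem_sphere_zero_iff_norm, norm_smul, norm_inv, norm_norm]
    exact inv_mul_cancel₀ (n.cast_nonneg.trans_lt (hg_norm n)).ne'
  obtain ⟨A, hA_norm, φ, hφ, hA⟩ := (isCompact_sphere _ _).tendsto_subseq hsphere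
  have hA₀ : A ≠ 0 := ne_zero_of_mem_unit_sphere ⟨A, hA_norm⟩
  have : Nontrivial E := not_subsingleton_iff_nontrivial.1 fun _ => hA₀ (Subsingleton.elim _ _)
  have hrange := range_eq_top_of_tendsto_smul hμ (fun n => (hg (φ n)).1) hA₀ hA
  have hdet := det_eq_zero_of_tendsto_smul (fun n => (hg (φ n)).2) (hc.comp hφ.tendsto_atTop) hA
  exact (LinearMap.range_lt_top_of_det_eq_zero hdet).ne hrange

end Furstenberg

/-! ### Forms invariant under a bounded group -/

lemma isCompact_topologicalClosure_of_norm_le {A : Type*} [NormedRing A] [ProperSpace A]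
    {H : Subgroup Aˣ} {C : ℝ} (hC : ∀ g ∈ H, ‖(g : A)‖ ≤ C) :
    IsCompact (H.topologicalClosure : Set Aˣ) := by
  let S : Set (A × Aᵐᵒᵖ) :=
    Metric.closedBall 0 C ×ˢ (MulOpposite.opHomeomorph '' Metric.closedBall 0 C)
  have hS : IsCompact S := (isCompact_closedBall _ _).prod
    ((isCompact_closedBall _ _).image MulOpposite.opHomeomorph.continuous)
  have hHS : (H : Set Aˣ) ⊆ Units.embedProduct A ⁻¹' S := fun g hg =>
    ⟨mem_closedBall_zero_iff.2 (hC g hg), _, mem_closedBall_zero_iff.2 (hC _ (H.inv_mem hg)), rfl⟩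
  exact (Units.isClosedEmbedding_embedProduct.isCompact_preimage hS).closure_of_subset hHS

/-- The fixed vector is the average of the orbit of `v` over Haar measure. -/
lemma exists_fixed_vector_of_forall_pos {K W : Type*} [Group K] [TopologicalSpace K]
    [IsTopologicalGroup K] [CompactSpace K] [NormedAddCommGroup W] [NormedSpace ℝ W]
    [CompleteSpace W] (ρ : K →* W →L[ℝ] W) {v : W} (hv : Continuous fun k => ρ k v)
    {φ : W →L[ℝ] ℝ} (hφ : ∀ k, 0 < φ (ρ k v)) :
    ∃ w, (∀ k, ρ k w = w) ∧ 0 < φ w := by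
  borelize K
  let ν : Measure K := Measure.haar
  have hint : Integrable (fun k => ρ k v) ν :=
    hv.integrable_of_hasCompactSupport (HasCompactSupport.of_compactSpace _)
  refine ⟨∫ k, ρ k v ∂ν, fun k => ?_, ?_⟩
  · calc ρ k (∫ h, ρ h v ∂ν) = ∫ h, ρ (k * h) v ∂ν := by
          simp only [map_mul, mul_apply_eq_comp, ContinuousLinearMap.integral_comp_comm _ hint]
      _ = ∫ h, ρ h v ∂ν := integral_mul_left_eq_self (fun h => ρ h v) k
  · rw [← ContinuousLinearMap.integral_comp_comm _ hint,
      integral_pos_iff_support_of_nonneg (fun k => (hφ k).le) (φ.integrable_comp hint)]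
    have hsupp : Function.support (fun k => φ (ρ k v)) = Set.univ :=
      Set.eq_univ_of_forall fun k => (hφ k).ne'
    exact hsupp ▸ isOpen_univ.measure_pos ν Set.univ_nonempty

section InvariantForm

set_option maxSynthPendingDepth 3

variable {E : Type*} [NormedAddCommGroup E] [NormedSpace ℝ E]

/-- The pull-back of bilinear forms under inverses, as a representation of the general linear
group. -/
noncomputable def pullbackInv (E : Type*) [NormedAddCommGroup E] [NormedSpace ℝ E] :
    (E →L[ℝ] E)ˣ →* (E →L[ℝ] E →L[ℝ] ℝ) →L[ℝ] E →L[ℝ] E →L[ℝ] ℝ where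
  toFun g := pullback ((g⁻¹ : (E →L[ℝ] E)ˣ) : E →L[ℝ] E)
  map_one' := by rw [inv_one, Units.val_one, pullback_one]
  map_mul' g h := by rw [mul_inv_rev, Units.val_mul, pullback_mul]

lemma units_smul_smul_projectivization (c : ℝˣ) (g : (E →L[ℝ] E)ˣ) (x : ℙ ℝ E) :
    (c • g) • x = g • x := by
  induction x with | _ v hv
  exact (Projectivization.mk_eq_mk_iff ℝ _ _ _ _).2 ⟨c, rfl⟩

variable [FiniteDimensional ℝ E]

lemma exists_absDet_smul_eq_one [Nontrivial E] (g : (E →L[ℝ] E)ˣ) :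
    ∃ c : ℝˣ, absDet E (c • g) = 1 := by
  have hg : 0 < absDet E g := (abs_nonneg _).lt_of_ne' ((Group.isUnit g).map (absDet E)).ne_zero
  let c := ((absDet E g)⁻¹) ^ ((Module.finrank ℝ E : ℝ)⁻¹)
  have hc : 0 < c := Real.rpow_pos_of_pos (inv_pos.2 hg) _
  refine ⟨.mk0 c hc.ne', ?_⟩
  have hcd : c ^ Module.finrank ℝ E = (absDet E g)⁻¹ :=
    Real.rpow_inv_natCast_pow (inv_pos.2 hg).le Module.finrank_pos.ne'
  rw [absDet_apply, Units.val_smul, Units.smul_mk0, ContinuousLinearMap.det,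
    ContinuousLinearMap.toLinearMap_smul, LinearMap.det_smul, hcd, abs_mul,
    ← ContinuousLinearMap.det, ← absDet_apply, abs_of_pos (inv_pos.2 hg), inv_mul_cancel₀ hg.ne']

lemma exists_form_apply_self_pos (E : Type*) [NormedAddCommGroup E] [NormedSpace ℝ E]
    [FiniteDimensional ℝ E] : ∃ Q : E →L[ℝ] E →L[ℝ] ℝ, ∀ v ≠ 0, 0 < Q v v :=
  ⟨(innerSL ℝ).bilinearComp (toEuclidean (E := E)).toContinuousLinearMap
    (toEuclidean (E := E)).toContinuousLinearMap, fun _ hv =>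
    real_inner_self_pos.2 ((map_ne_zero_iff _ toEuclidean.injective).2 hv)⟩

lemma exists_invariant_symmetric_form [Nontrivial E] {H : Subgroup (E →L[ℝ] E)ˣ} {C : ℝ}
    (hC : ∀ g ∈ H, ‖(g : E →L[ℝ] E)‖ ≤ C) : ∃ Q : E →L[ℝ] E →L[ℝ] ℝ,
      Q ≠ 0 ∧ Q.flip = Q ∧ ∀ g ∈ H, pullback (g : E →L[ℝ] E) Q = Q := by
  have : CompactSpace H.topologicalClosure :=
    isCompact_iff_compactSpace.1 (isCompact_topologicalClosure_of_norm_le hC)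
  obtain ⟨Q₀, hQ₀⟩ := exists_form_apply_self_pos E
  obtain ⟨e, he⟩ := exists_ne (0 : E)
  obtain ⟨Q, hQ, hQe⟩ := exists_fixed_vector_of_forall_pos
    ((pullbackInv E).comp H.topologicalClosure.subtype) (v := Q₀)
    (φ := (ContinuousLinearMap.apply ℝ ℝ e) ∘L ContinuousLinearMap.apply ℝ _ e)
    ((analyticOnNhd_pullback.continuous.comp
      (Units.continuous_val.comp continuous_subtype_val.inv)).clm_apply continuous_const)
    fun k => hQ₀ _ ((smul_ne_zero_iff_ne (k : (E →L[ℝ] E)ˣ)⁻¹).2 he)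
  have hinv : ∀ g ∈ H, pullback (g : E →L[ℝ] E) Q = Q := fun g hg => by
    simpa [pullbackInv] using hQ ⟨g⁻¹, H.le_topologicalClosure (H.inv_mem hg)⟩
  refine ⟨Q + Q.flip, fun h => ?_, ?_, fun g hg => ?_⟩
  · have : Q e e + Q e e = 0 := DFunLike.congr_fun (DFunLike.congr_fun h e) e
    exact (add_pos hQe hQe).ne' this
  · ext v w
    exact add_comm _ _
  · calc pullback (g : E →L[ℝ] E) (Q + Q.flip)
        = pullback (g : E →L[ℝ] E) Q + (pullback (g : E →L[ℝ] E) Q).flip := rfl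
      _ = Q + Q.flip := by rw [hinv g hg]

lemma exists_pullback_eq_smul [Nontrivial E] {μ : Measure (ℙ ℝ E)} {Q : E →L[ℝ] E →L[ℝ] ℝ}
    (hQ : ∀ g ∈ measurePreservingSubgroup (E →L[ℝ] E)ˣ μ ⊓ (absDet E).ker,
      pullback (g : E →L[ℝ] E) Q = Q)
    {B : (E →L[ℝ] E)ˣ} (hB : MeasurePreserving (B • ·) μ μ) :
    ∃ r : ℝ, pullback (B : E →L[ℝ] E) Q = r • Q := by
  obtain ⟨c, hc⟩ := exists_absDet_smul_eq_one B
  have hcB : MeasurePreserving ((c • B) • ·) μ μ := by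
    simpa only [units_smul_smul_projectivization] using hB
  have hQB : (c : ℝ) ^ 2 • pullback (B : E →L[ℝ] E) Q = Q := by
    rw [← pullback_smul]
    exact hQ (c • B) ⟨hcB, hc⟩
  exact ⟨((c : ℝ) ^ 2)⁻¹, (eq_inv_smul_iff₀ (pow_ne_zero 2 c.ne_zero)).2 hQB⟩

end InvariantForm

/-! ### Generic pairs -/

section GenericPair

variable {E : Type*} [NormedAddCommGroup E] [NormedSpace ℝ E] [FiniteDimensional ℝ E]

lemma eventually_residual_eq_bot_or_eq_top :
    ∀ᶠ p : (E →L[ℝ] E) × (E →L[ℝ] E) in residual _, ∀ m ≠ 0, ∀ n ≠ 0, ∀ V : Submodule ℝ E,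
      Set.MapsTo (p.1 ^ m : E →L[ℝ] E) V V → Set.MapsTo (p.2 ^ n : E →L[ℝ] E) V V →
        V = ⊥ ∨ V = ⊤ := by
  simp only [eventually_countable_forall]
  intro m hm n hn
  filter_upwards [eventually_residual_linearIndependent_words hm hn] with p hp V
  exact eq_bot_or_eq_top_of_linearIndependent_words hp

lemma eq_zero_of_measurePreserving {B C : (E →L[ℝ] E)ˣ}
    (hsubspace : ∀ m ≠ 0, ∀ n ≠ 0, ∀ V : Submodule ℝ E,
      Set.MapsTo ((B : E →L[ℝ] E) ^ m : E →L[ℝ] E) V V →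
        Set.MapsTo ((C : E →L[ℝ] E) ^ n : E →L[ℝ] E) V V → V = ⊥ ∨ V = ⊤)
    (hform : ∀ (Q : E →L[ℝ] E →L[ℝ] ℝ) (r t : ℝ), Q.flip = Q →
      pullback (B : E →L[ℝ] E) Q = r • Q → pullback (C : E →L[ℝ] E) Q = t • Q → Q = 0)
    {μ : Measure (ℙ ℝ E)} [IsFiniteMeasure μ] (hB : MeasurePreserving (B • ·) μ μ)
    (hC : MeasurePreserving (C • ·) μ μ) : μ = 0 := by
  cases subsingleton_or_nontrivial E
  · exact μ.eq_zero_of_isEmpty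
  by_contra hμ₀
  have : NeZero μ := ⟨hμ₀⟩
  by_cases hμ : ChargesNoProperSubspace μ
  · obtain ⟨R, hR⟩ := hμ.exists_norm_le
    obtain ⟨Q, hQ₀, hsymm, hQ⟩ := exists_invariant_symmetric_form hR
    obtain ⟨r, hr⟩ := exists_pullback_eq_smul hQ hB
    obtain ⟨t, ht⟩ := exists_pullback_eq_smul hQ hC
    exact hQ₀ (hform Q r t hsymm hr ht)
  · simp only [ChargesNoProperSubspace, not_forall] at hμ
    obtain ⟨W, hW, hμW⟩ := hμ
    obtain ⟨U, hbot, htop, hU⟩ := exists_periodic_submodule (G := (E →L[ℝ] E)ˣ)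
      (fun W => W.closed_of_finiteDimensional) hW hμW
    obtain ⟨m, hm, hBm⟩ := hU B hB
    obtain ⟨n, hn, hCn⟩ := hU C hC
    exact (hsubspace m hm n hn U hBm hCn).elim hbot htop

lemma tendsto_units_val_prodMap_residual {A : Type*} [NormedRing A] [CompleteSpace A] :
    Tendsto (Prod.map Units.val Units.val : Aˣ × Aˣ → A × A) (residual _) (residual _) :=
  tendsto_residual_of_isOpenMap (Units.continuous_val.prodMap Units.continuous_val)
    (Units.isOpenEmbedding_val.isOpenMap.prodMap Units.isOpenEmbedding_val.isOpenMap)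

theorem generic_pair_no_common_invariant_projective_measure_general
    (hE : 2 ≤ Module.finrank ℝ E) :
    ∀ᶠ p : (E →L[ℝ] E)ˣ × (E →L[ℝ] E)ˣ in residual _,
      ∀ (μ : Measure (ℙ ℝ E)) [IsFiniteMeasure μ], MeasurePreserving (p.1 • ·) μ μ →
        MeasurePreserving (p.2 • ·) μ μ → μ = 0 := by
  filter_upwards
    [tendsto_units_val_prodMap_residual.eventually eventually_residual_eq_bot_or_eq_top,
      tendsto_units_val_prodMap_residual.eventually
        (eventually_residual_no_common_conformal_form hE)]
    with p hsubspace hform μ _ hB hC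
  exact eq_zero_of_measurePreserving hsubspace hform hB hC

end GenericPair

lemma measurePreserving_of_projectiveMap {d : ℕ}
    {B : (EuclideanSpace ℝ (Fin d) →L[ℝ] EuclideanSpace ℝ (Fin d))ˣ}
    {μ : Measure (ℙ ℝ (EuclideanSpace ℝ (Fin d)))}
    (hB : ∀ s, MeasurableSet s → μ (projectiveMap B ⁻¹' s) = μ s) :
    MeasurePreserving (B • ·) μ μ :=
  have hcont : Continuous (B • · : ℙ ℝ (EuclideanSpace ℝ (Fin d)) → _) := continuous_const_smul B
  ⟨hcont.measurable, Measure.ext fun s hs =>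
    (Measure.map_apply hcont.measurable hs).trans (hB s hs)⟩

/-- **Generic pairs of projective maps admit no common invariant measure.**
For every `d ≥ 2` there is a dense `G_δ` subset `𝒢` of `GL(d,ℝ) × GL(d,ℝ)` such that for
`(B, B′) ∈ 𝒢` no Borel probability measure on the projective space `P(ℝ^d)` is invariant
under both induced maps. -/
theorem generic_pair_no_common_invariant_projective_measure (d : ℕ) (hd : 2 ≤ d) :
    ∃ 𝒢 : Set ((EuclideanSpace ℝ (Fin d) →L[ℝ] EuclideanSpace ℝ (Fin d))ˣ ×
        (EuclideanSpace ℝ (Fin d) →L[ℝ] EuclideanSpace ℝ (Fin d))ˣ),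
      Dense 𝒢 ∧ IsGδ 𝒢 ∧
      ∀ p ∈ 𝒢,
        ¬ ∃ μ : Measure (Projectivization ℝ (EuclideanSpace ℝ (Fin d))),
          IsProbabilityMeasure μ ∧
          (∀ s, MeasurableSet s → μ (projectiveMap p.1 ⁻¹' s) = μ s) ∧
          (∀ s, MeasurableSet s → μ (projectiveMap p.2 ⁻¹' s) = μ s) := by
  have hfinrank : 2 ≤ Module.finrank ℝ (EuclideanSpace ℝ (Fin d)) := by
    rwa [finrank_euclideanSpace_fin]
  obtain ⟨𝒢, hGδ, hdense, h𝒢⟩ := eventually_residual.1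
    (generic_pair_no_common_invariant_projective_measure_general hfinrank)
  refine ⟨𝒢, hdense, hGδ, fun p hp ⟨μ, _, hB, hC⟩ => IsProbabilityMeasure.ne_zero μ ?_⟩
  exact h𝒢 p hp μ (measurePreserving_of_projectiveMap hB) (measurePreserving_of_projectiveMap hC)
end

section
/- Let X be a finite subset of the circle ℝ/ℤ with d = #X ≥ 1. Then for every a ∈ (0, 1/2) there exist a real number κ with d^{−2d}·(a/2)^d ≤ κ ≤ a/2, an integer n ≥ 1, and real numbers t₁ < t₂ < ⋯ < t_n < t₁ + 1 such that: every element of X is the image modulo 1 of a point of one of the open intervals (t_i, t_i + κ); and the gaps satisfy t_{i+1} − (t_i + κ) > κ/a for 1 ≤ i ≤ n−1, as well as (t₁ + 1) − (t_n + κ) > κ/a. Equivalently: X is covered by n open arcs of ℝ/ℤ, each of length κ, and every connected component of the complement of their union has length greater than κ/a. -/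
/-!
Let `d = #X`. For a set `S` of `d` points on the line, call `s ∈ S` a cluster start at scale `ε` if
no point of `S` lies less than `ε` below it. Every point of `S` lies at most `(d - 1) δ` above some
cluster start at scale `δ`. As the scale decreases the set of cluster starts grows, at most `d - 1`
times, so among the scales `ℓ, ℓ q, …, ℓ q ^ d` two consecutive ones, `δ / q` and `δ`, have the
same cluster starts. With `q = a / (2 d)` and `κ = d δ`, open intervals of length `κ` beginning
slightly below these starts cover `S`, while the starts are `δ / q = 2 κ / a > κ + κ / a` apart.

To pass from the circle to the line, cut it at the lower end of an arc of length `p / d` free of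
points of `X`; with `ℓ = p / d` this arc provides the gap across the cut.
-/

open Finset

section ClusterStarts

variable {α : Type*} [AddCommGroup α] [LinearOrder α]

/-- The points of `S` at which a new cluster begins, when points of `S` less than `ε` apart are put
into the same cluster. The least point of `S` always is one of them. -/
def clusterStarts (S : Finset α) (ε : α) : Finset α :=
  {c ∈ S | ∀ y ∈ S, y < c → ε ≤ c - y}

variable {S : Finset α}

lemma mem_clusterStarts {ε c : α} :
    c ∈ clusterStarts S ε ↔ c ∈ S ∧ ∀ y ∈ S, y < c → ε ≤ c - y :=
  mem_filter

lemma clusterStarts_subset (S : Finset α) (ε : α) : clusterStarts S ε ⊆ S :=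
  filter_subset _ _

lemma clusterStarts_antitone (S : Finset α) : Antitone (clusterStarts S) :=
  fun _ _ h => monotone_filter_right S fun _ _ hc y hy hyc => h.trans (hc y hy hyc)

lemma clusterStarts_nonempty (hS : S.Nonempty) (ε : α) : (clusterStarts S ε).Nonempty :=
  ⟨S.min' hS, mem_clusterStarts.mpr
    ⟨S.min'_mem hS, fun y hy hlt => absurd (S.min'_le y hy) hlt.not_ge⟩⟩

lemma le_sub_of_mem_clusterStarts {ε c c' : α} (hc : c ∈ clusterStarts S ε)
    (hc' : c' ∈ clusterStarts S ε) (h : c < c') : ε ≤ c' - c :=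
  (mem_clusterStarts.mp hc').2 c (clusterStarts_subset S ε hc) h

variable [IsOrderedAddMonoid α]

lemma exists_mem_clusterStarts_sub_le_card_filter_lt {δ : α} (hδ : 0 ≤ δ) {s : α} (hs : s ∈ S) :
    ∃ c ∈ clusterStarts S δ, c ≤ s ∧ s - c ≤ #{y ∈ S | y < s} • δ := by
  induction hk : #{y ∈ S | y < s} using Nat.strong_induction_on generalizing s with
  | _ k ih =>
    by_cases hstart : ∀ y ∈ S, y < s → δ ≤ s - y
    · exact ⟨s, mem_clusterStarts.mpr ⟨hs, hstart⟩, le_rfl, by simpa using nsmul_nonneg hδ k⟩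
    push Not at hstart
    obtain ⟨y, hy, hys, hsy⟩ := hstart
    have hcard : #{z ∈ S | z < y} < k := by
      rw [← hk]
      refine card_lt_card (ssubset_iff_of_subset ?_ |>.mpr ⟨y, by simp [hy, hys]⟩)
      exact monotone_filter_right S fun _ _ hz => hz.trans hys
    obtain ⟨c, hc, hcy, hle⟩ := ih _ hcard hy rfl
    refine ⟨c, hc, hcy.trans hys.le, ?_⟩
    calc s - c = (y - c) + (s - y) := by abel
      _ ≤ #{z ∈ S | z < y} • δ + δ := add_le_add hle hsy.le
      _ = (#{z ∈ S | z < y} + 1) • δ := (succ_nsmul δ _).symm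
      _ ≤ k • δ := nsmul_le_nsmul_left hδ hcard

lemma exists_mem_clusterStarts_sub_le {δ : α} (hδ : 0 ≤ δ) {s : α} (hs : s ∈ S) :
    ∃ c ∈ clusterStarts S δ, c ≤ s ∧ s - c ≤ (#S - 1) • δ := by
  obtain ⟨c, hc, hcs, hle⟩ := exists_mem_clusterStarts_sub_le_card_filter_lt hδ hs
  have hcard : #{y ∈ S | y < s} < #S :=
    card_lt_card (filter_ssubset.mpr ⟨s, hs, lt_irrefl s⟩)
  exact ⟨c, hc, hcs, hle.trans (nsmul_le_nsmul_left hδ (Nat.le_sub_one_of_lt hcard))⟩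

end ClusterStarts

lemma exists_succ_eq_of_monotone_of_subset {α : Type*} {F : ℕ → Finset α} {S : Finset α}
    (hF : Monotone F) (h0 : (F 0).Nonempty) (hS : ∀ j, F j ⊆ S) :
    ∃ j < #S, F (j + 1) = F j := by
  by_contra! hne
  have hcard : ∀ j ≤ #S, j < #(F j) := by
    intro j hj
    induction j with
    | zero => exact h0.card_pos
    | succ j ih =>
      have hssub : F j ⊂ F (j + 1) := (hF j.le_succ).lt_of_ne (hne j hj).symm
      exact (Nat.succ_le_of_lt (ih (by lia))).trans_lt (card_lt_card hssub)
  exact (hcard _ le_rfl).not_ge (card_le_card (hS _))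

section Circle

variable {𝕜 : Type*} [Field 𝕜] [LinearOrder 𝕜] [IsStrictOrderedRing 𝕜]

lemma inv_pow_two_mul_mul_pow_le_div_pow {x d : 𝕜} (hx : 0 ≤ x) (hd : 1 ≤ d) (n : ℕ) :
    (d ^ (2 * n))⁻¹ * x ^ n ≤ (x / d) ^ n := by
  rw [inv_mul_eq_div, div_pow]
  gcongr
  lia

lemma exists_scale_forall_exists_mem_clusterStarts {S : Finset 𝕜} (hS : S.Nonempty) {ℓ q : 𝕜}
    (hℓ : 0 ≤ ℓ) (hq0 : 0 < q) (hq1 : q ≤ 1) :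
    ∃ δ ∈ Set.Icc (ℓ * q ^ #S) (ℓ * q), ∀ s ∈ S,
      ∃ c ∈ clusterStarts S (δ / q), c ≤ s ∧ s - c ≤ (#S - 1) • δ := by
  have hscale : Antitone fun j : ℕ => ℓ * q ^ j :=
    (pow_right_anti₀ hq0.le hq1).const_mul hℓ
  obtain ⟨j, hj, hstarts⟩ := exists_succ_eq_of_monotone_of_subset
    (F := fun j => clusterStarts S (ℓ * q ^ j))
    ((clusterStarts_antitone S).comp hscale) (clusterStarts_nonempty hS _)
    fun _ => clusterStarts_subset S _
  have hdiv : ℓ * q ^ (j + 1) / q = ℓ * q ^ j := by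
    rw [pow_succ, ← mul_assoc, mul_div_cancel_right₀ _ hq0.ne']
  refine ⟨ℓ * q ^ (j + 1), ⟨hscale hj, ?_⟩, fun s hs => ?_⟩
  · simpa only [pow_one] using hscale (Nat.le_add_left 1 j)
  · rw [hdiv]
    have hδ : 0 ≤ ℓ * q ^ (j + 1) := by positivity
    simpa only [← hstarts] using exists_mem_clusterStarts_sub_le hδ hs

lemma exists_separated_intervals_cover {S : Finset 𝕜} (hS : S.Nonempty) {ℓ q : 𝕜} (hℓ : 0 < ℓ)
    (hq0 : 0 < q) (hq1 : q ≤ 1) :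
    ∃ δ ∈ Set.Icc (ℓ * q ^ #S) (ℓ * q), ∃ n : ℕ, ∃ t : Fin (n + 1) → 𝕜,
      StrictMono t ∧
      (∀ s ∈ S, ∃ i, t i < s ∧ s < t i + #S * δ) ∧
      (∀ i : Fin n, δ / q ≤ t i.succ - t i.castSucc) ∧
      ∀ i, t i + δ / 2 ∈ S := by
  obtain ⟨δ, hδ, hnear⟩ := exists_scale_forall_exists_mem_clusterStarts hS hℓ.le hq0 hq1
  have hδ0 : 0 < δ := lt_of_lt_of_le (by positivity) hδ.1
  obtain ⟨n, hn⟩ := Nat.exists_eq_add_one_of_ne_zero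
    (clusterStarts_nonempty hS (δ / q)).card_ne_zero
  set c := (clusterStarts S (δ / q)).orderEmbOfFin hn
  have hc : ∀ i, c i ∈ clusterStarts S (δ / q) := orderEmbOfFin_mem _ hn
  -- Clusters have length at most `#S * δ - δ`, which leaves room of `δ / 2` on either side.
  refine ⟨δ, hδ, n, fun i => c i - δ / 2, fun i j h => ?_, fun s hs => ?_, fun i => ?_,
    fun i => ?_⟩
  · exact sub_lt_sub_right (c.strictMono h) _
  · obtain ⟨y, hy, hys, hle⟩ := hnear s hs
    obtain ⟨i, rfl⟩ : y ∈ Set.range c := by rwa [range_orderEmbOfFin]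
    rw [nsmul_eq_mul, Nat.cast_pred hS.card_pos, sub_one_mul] at hle
    exact ⟨i, by linarith, by linarith⟩
  · rw [sub_sub_sub_cancel_right]
    exact le_sub_of_mem_clusterStarts (hc _) (hc _) (c.strictMono i.castSucc_lt_succ)
  · rw [sub_add_cancel]
    exact clusterStarts_subset S _ (hc i)

variable [Archimedean 𝕜] {p : 𝕜} [Fact (0 < p)]

/-- The representatives in `(b, b + p]` of the points of `X`: the circle cut open at `b`. -/
noncomputable def iocLift (X : Finset (AddCircle p)) (b : 𝕜) : Finset 𝕜 :=
  X.image fun x => (AddCircle.equivIoc p b x : 𝕜)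

variable {X : Finset (AddCircle p)}

lemma card_iocLift (X : Finset (AddCircle p)) (b : 𝕜) : #(iocLift X b) = #X :=
  card_image_of_injective X (Subtype.val_injective.comp (AddCircle.equivIoc p b).injective)

lemma mem_iocLift {b s : 𝕜} :
    s ∈ iocLift X b ↔ s ∈ Set.Ioc b (b + p) ∧ (s : AddCircle p) ∈ X := by
  refine mem_image.trans ⟨?_, fun ⟨hs, hsX⟩ => ⟨s, hsX, AddCircle.equivIoc_coe_of_mem hs⟩⟩
  rintro ⟨x, hx, rfl⟩
  exact ⟨(AddCircle.equivIoc p b x).2, by rwa [AddCircle.coe_equivIoc]⟩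

lemma exists_mem_iocLift {x : AddCircle p} (hx : x ∈ X) (b : 𝕜) :
    ∃ s ∈ iocLift X b, (s : AddCircle p) = x :=
  ⟨_, mem_image_of_mem _ hx, AddCircle.coe_equivIoc⟩

lemma exists_forall_mem_iocLift_add_le (hX : X.Nonempty) :
    ∃ b : 𝕜, ∀ s ∈ iocLift X b, b + p / #X ≤ s := by
  have hp : 0 < p := Fact.out
  obtain ⟨x₀, hx₀⟩ := hX
  obtain ⟨r, rfl⟩ := QuotientAddGroup.mk_surjective x₀
  have hd : 0 < #X := card_pos.mpr ⟨_, hx₀⟩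
  have hδ : 0 < p / #X := by positivity
  -- The first cut, at a point of `X`, makes that point the top of the lift; the cluster start near
  -- the top is then preceded by an arc free of `X`, at the bottom of which the second cut is made.
  have htop : r + p ∈ iocLift X r :=
    mem_iocLift.mpr ⟨⟨by linarith, le_rfl⟩, by rwa [AddCircle.coe_add_period]⟩
  obtain ⟨c, hc, -, hle⟩ := exists_mem_clusterStarts_sub_le hδ.le htop
  have hrc : r ≤ c - p / #X := by
    rw [card_iocLift, nsmul_eq_mul, Nat.cast_pred hd, sub_mul, mul_div_cancel₀ _ (by positivity)]
      at hle
    linarith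
  have hcr : c ≤ r + p := (mem_iocLift.mp (clusterStarts_subset _ _ hc)).1.2
  refine ⟨c - p / #X, fun s hs => ?_⟩
  obtain ⟨⟨hs0, -⟩, hsX⟩ := mem_iocLift.mp hs
  rw [sub_add_cancel]
  by_contra! hsc
  have hsr : s ∈ iocLift X r := mem_iocLift.mpr ⟨⟨by linarith, by linarith⟩, hsX⟩
  have hgap : p / #X ≤ c - s := (mem_clusterStarts.mp hc).2 s hsr hsc
  linarith

theorem circle_covering_with_separated_arcs_general (hX : X.Nonempty) {a : 𝕜}
    (ha : a ∈ Set.Ioo 0 1) :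
    ∃ κ ∈ Set.Icc (p * (a / (2 * #X)) ^ #X) (p * (a / (2 * #X))),
      ∃ n : ℕ, ∃ t : Fin (n + 1) → 𝕜,
        StrictMono t ∧
        (∀ x ∈ X, ∃ i : Fin (n + 1), ∃ s : 𝕜,
          t i < s ∧ s < t i + κ ∧ (s : AddCircle p) = x) ∧
        (∀ i : Fin n, κ / a < t i.succ - (t i.castSucc + κ)) ∧
        κ / a < (t 0 + p) - (t (Fin.last n) + κ) := by
  obtain ⟨ha0, ha1⟩ := ha
  have hp : 0 < p := Fact.out
  have hd : (1 : 𝕜) ≤ #X := by exact_mod_cast hX.card_pos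
  have hq0 : 0 < a / (2 * #X) := by positivity
  have hq1 : a / (2 * #X) ≤ 1 := (div_le_one (by positivity)).mpr (by linarith)
  obtain ⟨b, hb⟩ := exists_forall_mem_iocLift_add_le hX
  have hS : (iocLift X b).Nonempty := hX.image _
  obtain ⟨δ, ⟨hδlo, hδhi⟩, n, t, hmono, hcover, hsep, hmem⟩ :=
    exists_separated_intervals_cover hS (ℓ := p / #X) (by positivity) hq0 hq1
  rw [card_iocLift] at hδlo hcover
  have hδ : 0 < δ := lt_of_lt_of_le (by positivity) hδlo
  have hκa : #X * δ < #X * δ / a :=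
    (lt_div_iff₀ ha0).mpr (mul_lt_of_lt_one_right (by positivity) ha1)
  have hδq : δ / (a / (2 * #X)) = #X * δ / a + #X * δ / a := by field_simp; ring
  refine ⟨#X * δ, ⟨?_, ?_⟩, n, t, hmono, fun x hx => ?_, fun i => ?_, ?_⟩
  · calc p * (a / (2 * #X)) ^ #X = #X * (p / #X * (a / (2 * #X)) ^ #X) := by field_simp
      _ ≤ #X * δ := by gcongr
  · calc #X * δ ≤ #X * (p / #X * (a / (2 * #X))) := by gcongr
      _ = p * (a / (2 * #X)) := by field_simp
  · obtain ⟨s, hs, hsx⟩ := exists_mem_iocLift hx b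
    obtain ⟨i, hts, hst⟩ := hcover s hs
    exact ⟨i, s, hts, hst, hsx⟩
  · linarith [hsep i]
  · have hcut : δ / (a / (2 * #X)) ≤ p / #X := (div_le_iff₀ hq0).mpr hδhi
    have hfirst := hb _ (hmem 0)
    have hlast := (mem_iocLift.mp (hmem (Fin.last n))).1.2
    linarith

end Circle

/-- **Covering sublemma on the circle.**  A finite subset `X` of `ℝ/ℤ` of cardinality `d ≥ 1`
can, for every `a ∈ (0,1/2)`, be covered by finitely many open arcs of common length
`κ ∈ [d^{−2d}(a/2)^d, a/2]` such that every complementary gap has length greater than `κ/a`.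
The arcs are presented as the images mod 1 of intervals `(t_i, t_i + κ)` with
`t₁ < ⋯ < t_n < t₁ + 1`. -/
theorem circle_covering_with_separated_arcs
    (X : Finset (AddCircle (1 : ℝ))) (hX : 1 ≤ X.card)
    (a : ℝ) (ha : a ∈ Set.Ioo (0 : ℝ) (1/2)) :
    ∃ κ : ℝ,
      ((X.card : ℝ) ^ (2 * X.card))⁻¹ * (a / 2) ^ X.card ≤ κ ∧ κ ≤ a / 2 ∧
      ∃ n : ℕ, ∃ t : Fin (n + 1) → ℝ,
        StrictMono t ∧
        (∀ x ∈ X, ∃ i : Fin (n + 1), ∃ s : ℝ,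
          t i < s ∧ s < t i + κ ∧ (s : AddCircle (1 : ℝ)) = x) ∧
        (∀ i : Fin n, κ / a < t i.succ - (t i.castSucc + κ)) ∧
        κ / a < (t 0 + 1) - (t (Fin.last n) + κ) := by
  obtain ⟨κ, ⟨hlo, hhi⟩, harcs⟩ := circle_covering_with_separated_arcs_general
    (card_pos.mp hX) ⟨ha.1, ha.2.trans one_half_lt_one⟩
  have hd : (1 : ℝ) ≤ X.card := by exact_mod_cast hX
  have ha2 : 0 ≤ a / 2 := (half_pos ha.1).le
  rw [one_mul, ← div_div] at hlo hhi
  exact ⟨κ, (inv_pow_two_mul_mul_pow_le_div_pow ha2 hd _).trans hlo,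
    hhi.trans (div_le_self ha2 hd), harcs⟩
end

section
/- For every integer d ≥ 1 and all θ > 0, χ′ > 0 there exists η > 0 with the following property. Let Q be a compact subset of the closed unit ball of ℝ^d that is homeomorphic to the closed unit ball of ℝ^d and has diameter equal to 1, and let f : B(0,2) → ℝ^d be a C^∞ map that is a diffeomorphism onto its image and satisfies ‖Df(x) − Id‖ < η for all x ∈ B(0,2). Then there exist b ∈ ℝ^d and a C^∞ map g : B(0,2) → ℝ^d that is a diffeomorphism onto its image such that: g(x) = f(x) for every x ∈ B(0,2) whose distance to Q is at least χ′; g(z) = z + b for every z ∈ Q; and ‖Dg(x) − Df(x)‖ ≤ θ for all x ∈ B(0,2). -/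
open Metric

/-!
Fix `q ∈ Q`, put `b = f q - q`, and let `g = f + φ • (id + b - f)`, where `φ` is a smooth cutoff
equal to `1` on `Q` and supported within distance `χ'` of `Q`.  Then
`Dg - Df = φ (Id - Df) + Dφ ⊗ (id + b - f)`.  The first term is at most `η`.  On the support of `φ`
a point `x` is within `diam Q + χ'` of `q`, so the mean value inequality for `f - id` gives
`‖x + b - f x‖ ≤ η (diam Q + χ')` and the second term is at most `C η (diam Q + χ')`, where `C`
bounds `‖Dφ‖`.  For small `η` the map `g` is so `C¹`-close to the identity on a convex set that it
is a diffeomorphism onto its image.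

The order of quantifiers requires `C` to be independent of `Q`.  This holds if `φ` is the
convolution of the indicator function of a neighbourhood of `Q` with a fixed mollifier `ρ` of
small support: then `‖Dφ‖ ≤ ∫ ‖Dρ‖`, whatever `Q` is.
-/

open MeasureTheory
open scoped ContDiff Convolution NNReal

section Diffeomorphism

variable {𝕜 E F : Type*} [NormedAddCommGroup E] [NormedAddCommGroup F]

/-- A `C^n` diffeomorphism of the set `s` onto an open image.  The map is given on the whole space,
but only its values on `s` are constrained; likewise the inverse is any function on the codomain
that is `C^n` on `f '' s` and inverts `f` there. -/
structure IsDiffeoOntoImage (𝕜 : Type*) [NontriviallyNormedField 𝕜] [NormedSpace 𝕜 E]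
    [NormedSpace 𝕜 F] (n : WithTop ℕ∞) (f : E → F) (s : Set E) : Prop where
  contDiffOn : ContDiffOn 𝕜 n f s
  isOpen_image : IsOpen (f '' s)
  exists_leftInvOn : ∃ finv, ContDiffOn 𝕜 n finv (f '' s) ∧ Set.LeftInvOn finv f s

theorem IsDiffeoOntoImage.injOn [NontriviallyNormedField 𝕜] [NormedSpace 𝕜 E] [NormedSpace 𝕜 F]
    {n : WithTop ℕ∞} {f : E → F} {s : Set E} (hf : IsDiffeoOntoImage 𝕜 n f s) : Set.InjOn f s :=
  let ⟨_, _, hfinv⟩ := hf.exists_leftInvOn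
  hfinv.injOn

theorem exists_continuousLinearEquiv_of_norm_sub_id_lt_one [NontriviallyNormedField 𝕜]
    [NormedSpace 𝕜 E] [CompleteSpace E] {A : E →L[𝕜] E}
    (hA : ‖A - ContinuousLinearMap.id 𝕜 E‖ < 1) : ∃ e : E ≃L[𝕜] E, (e : E →L[𝕜] E) = A := by
  have hA' : ‖ContinuousLinearMap.id 𝕜 E - A‖ < 1 := by rwa [norm_sub_rev]
  exact ⟨.ofUnit (Units.oneSub _ hA'), sub_sub_cancel (ContinuousLinearMap.id 𝕜 E) A⟩

theorem isDiffeoOntoImage_source [NontriviallyNormedField 𝕜] [NormedSpace 𝕜 E] [NormedSpace 𝕜 F]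
    [CompleteSpace E] {n : WithTop ℕ∞} (G : OpenPartialHomeomorph E F)
    (hG : ContDiffOn 𝕜 n G G.source)
    (hG' : ∀ x ∈ G.source, ∃ e : E ≃L[𝕜] F, HasFDerivAt G (e : E →L[𝕜] F) x) :
    IsDiffeoOntoImage 𝕜 n G G.source := by
  refine ⟨hG, G.image_source_eq_target ▸ G.open_target, G.symm, ?_, fun x => G.left_inv⟩
  rw [G.image_source_eq_target]
  intro y hy
  have hx := G.map_target hy
  obtain ⟨e, he⟩ := hG' _ hx
  exact (G.contDiffAt_symm hy he (hG.contDiffAt (G.open_source.mem_nhds hx))).contDiffWithinAt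

theorem isDiffeoOntoImage_of_norm_fderiv_sub_id_le [RCLike 𝕜] [NormedSpace 𝕜 E] [NormedSpace ℝ E]
    [CompleteSpace E] {n : WithTop ℕ∞} (hn : n ≠ 0) {g : E → E} {s : Set E} (hs : IsOpen s)
    (hconv : Convex ℝ s) (hg : ContDiffOn 𝕜 n g s) {c : ℝ≥0} (hc : c < 1)
    (hg' : ∀ x ∈ s, ‖fderiv 𝕜 g x - ContinuousLinearMap.id 𝕜 E‖ ≤ c) :
    IsDiffeoOntoImage 𝕜 n g s := by
  have hdiff : ∀ x ∈ s, DifferentiableAt 𝕜 g x := fun x hx =>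
    (hg.contDiffAt (hs.mem_nhds hx)).differentiableAt hn
  have happrox : ApproximatesLinearOn g (ContinuousLinearEquiv.refl 𝕜 E : E →L[𝕜] E) s c :=
    fun x hx y hy => hconv.norm_image_sub_le_of_norm_fderiv_le' hdiff hg' hy hx
  have hc' : Subsingleton E ∨
      c < ‖((ContinuousLinearEquiv.refl 𝕜 E).symm : E →L[𝕜] E)‖₊⁻¹ := by
    refine (subsingleton_or_nontrivial E).imp_right fun (_ : Nontrivial E) => ?_
    have hid : ‖((ContinuousLinearEquiv.refl 𝕜 E).symm : E →L[𝕜] E)‖₊ = 1 :=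
      NNReal.eq ContinuousLinearMap.norm_id
    rwa [hid, inv_one]
  refine isDiffeoOntoImage_source (happrox.toOpenPartialHomeomorph g s hc' hs) hg fun x hx => ?_
  obtain ⟨e, he⟩ := exists_continuousLinearEquiv_of_norm_sub_id_lt_one
    ((hg' x hx).trans_lt (NNReal.coe_lt_one.2 hc))
  exact ⟨e, he ▸ (hdiff x hx).hasFDerivAt⟩

end Diffeomorphism

section Cutoff

section Convolution

open scoped Pointwise

variable {𝕜 G E E' F : Type*} [NormedAddCommGroup E] [NormedAddCommGroup E'] [NormedAddCommGroup F]
  [NormedSpace ℝ F] [MeasurableSpace G] {f : G → E} {g : G → E'} {M : ℝ}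

theorem norm_convolution_le [NontriviallyNormedField 𝕜] [NormedSpace 𝕜 E] [NormedSpace 𝕜 E']
    [NormedSpace 𝕜 F] [Sub G] {μ : Measure G} (L : E →L[𝕜] E' →L[𝕜] F) (hf : Integrable f μ)
    (hg : ∀ y, ‖g y‖ ≤ M) (x : G) :
    ‖(f ⋆[L, μ] g) x‖ ≤ ‖L‖ * M * ∫ t, ‖f t‖ ∂μ := by
  rw [convolution_def, ← integral_const_mul (‖L‖ * M)]
  refine norm_integral_le_of_norm_le (hf.norm.const_mul _) (.of_forall fun t => ?_)
  calc ‖L (f t) (g (x - t))‖ ≤ ‖L‖ * ‖f t‖ * ‖g (x - t)‖ := L.le_opNorm₂ _ _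
    _ ≤ ‖L‖ * ‖f t‖ * M := by gcongr; exact hg _
    _ = ‖L‖ * M * ‖f t‖ := mul_right_comm _ _ _

theorem norm_fderiv_convolution_left_le [RCLike 𝕜] [NormedSpace 𝕜 E] [NormedSpace 𝕜 E']
    [NormedSpace 𝕜 F] [NormedAddCommGroup G] [NormedSpace 𝕜 G] [BorelSpace G]
    {μ : Measure G} [SFinite μ] [μ.IsAddLeftInvariant] [μ.IsNegInvariant]
    [IsFiniteMeasureOnCompacts μ] (L : E →L[𝕜] E' →L[𝕜] F) (hf_supp : HasCompactSupport f)
    (hf : ContDiff 𝕜 1 f) (hg : LocallyIntegrable g μ) (hgM : ∀ y, ‖g y‖ ≤ M) (x : G) :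
    ‖fderiv 𝕜 (f ⋆[L, μ] g) x‖ ≤ ‖L‖ * M * ∫ t, ‖fderiv 𝕜 f t‖ ∂μ := by
  have hM : 0 ≤ M := (norm_nonneg _).trans (hgM x)
  have hf_int : Integrable (fderiv 𝕜 f) μ :=
    (hf.continuous_fderiv one_ne_zero).integrable_of_hasCompactSupport (hf_supp.fderiv 𝕜)
  rw [(hf_supp.hasFDerivAt_convolution_left L hf hg x).fderiv]
  refine (norm_convolution_le _ hf_int hgM x).trans ?_
  gcongr
  exact L.norm_precompL_le G

theorem tsupport_convolution_subset_cthickening [NontriviallyNormedField 𝕜] [NormedSpace 𝕜 E]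
    [NormedSpace 𝕜 E'] [NormedSpace 𝕜 F] [SeminormedAddCommGroup G]
    {μ : Measure G} (L : E →L[𝕜] E' →L[𝕜] F) {Q : Set G} {δ ε : ℝ}
    (hf : Function.support f ⊆ ball 0 δ) (hg : Function.support g ⊆ thickening ε Q) :
    tsupport (f ⋆[L, μ] g) ⊆ cthickening (δ + ε) Q := by
  refine (closure_mono ?_).trans (closure_thickening_subset_cthickening _ _)
  calc Function.support (f ⋆[L, μ] g) ⊆ Function.support g + Function.support f :=
        support_convolution_subset_swap L
    _ ⊆ thickening ε Q + ball 0 δ := Set.add_subset_add hg hf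
    _ = thickening δ (thickening ε Q) := add_ball_zero _ _
    _ ⊆ thickening (δ + ε) Q := thickening_thickening_subset _ _ _

end Convolution

theorem exists_contDiff_cutoff_norm_fderiv_le (E : Type*) [NormedAddCommGroup E] [NormedSpace ℝ E]
    [FiniteDimensional ℝ E] {r : ℝ} (hr : 0 < r) :
    ∃ C : ℝ≥0, ∀ Q : Set E, ∃ φ : E → ℝ, ContDiff ℝ ∞ φ ∧ tsupport φ ⊆ thickening r Q ∧
      (∀ x ∈ Q, φ x = 1) ∧ (∀ x, ‖φ x‖ ≤ 1) ∧ ∀ x, ‖fderiv ℝ φ x‖ ≤ C := by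
  borelize E
  let μ : Measure E := .addHaar
  let β : ContDiffBump (0 : E) := ⟨r / 6, r / 3, by positivity, by linarith⟩
  let L := ContinuousLinearMap.lsmul ℝ ℝ (E := ℝ)
  have hL : ‖L‖ ≤ 1 := ContinuousLinearMap.opNorm_lsmul_le
  refine ⟨⟨∫ t, ‖fderiv ℝ (β.normed μ) t‖ ∂μ, by positivity⟩, fun Q => ?_⟩
  let χ : E → ℝ := (thickening (r / 3) Q).indicator 1
  have hχ : LocallyIntegrable χ μ :=
    (locallyIntegrable_const (1 : ℝ)).indicator isOpen_thickening.measurableSet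
  have hχ_le : ∀ y, ‖χ y‖ ≤ 1 := fun y => by
    simpa using norm_indicator_le_norm_self (s := thickening (r / 3) Q) (1 : E → ℝ) y
  refine ⟨β.normed μ ⋆[L, μ] χ,
    β.hasCompactSupport_normed.contDiff_convolution_left L β.contDiff_normed hχ,
    ?_, fun x hx => ?_, fun x => ?_, fun x => ?_⟩
  · have hsum : r / 3 + r / 3 < r := by linarith
    exact (tsupport_convolution_subset_cthickening L β.support_normed_eq.subset
      Set.support_indicator_subset).trans (cthickening_subset_thickening' hr hsum Q)
  · have hχ_one : ∀ y ∈ ball x (r / 3), χ y = 1 := fun y hy =>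
      Set.indicator_of_mem (ball_subset_thickening hx _ hy) 1
    have hχx : χ x = 1 := hχ_one x (mem_ball_self (by positivity))
    rw [β.normed_convolution_eq_right fun y hy => (hχ_one y hy).trans hχx.symm, hχx]
  · calc ‖(β.normed μ ⋆[L, μ] χ) x‖ ≤ ‖L‖ * 1 * ∫ t, ‖β.normed μ t‖ ∂μ :=
          norm_convolution_le L β.integrable_normed hχ_le x
      _ = ‖L‖ := by
          simp only [Real.norm_of_nonneg (β.nonneg_normed _), β.integral_normed, mul_one]
      _ ≤ 1 := hL
  · calc ‖fderiv ℝ (β.normed μ ⋆[L, μ] χ) x‖ ≤ ‖L‖ * 1 * ∫ t, ‖fderiv ℝ (β.normed μ) t‖ ∂μ :=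
          norm_fderiv_convolution_left_le L β.hasCompactSupport_normed β.contDiff_normed hχ hχ_le x
      _ ≤ ∫ t, ‖fderiv ℝ (β.normed μ) t‖ ∂μ :=
          mul_le_of_le_one_left (by positivity) (by rwa [mul_one])

end Cutoff

section Gluing

variable {E F : Type*} [NormedAddCommGroup E] [NormedSpace ℝ E]

theorem norm_fderiv_lineMap_sub_le [NormedAddCommGroup F] [NormedSpace ℝ F] {f h : E → F}
    {φ : E → ℝ} {x : E} (hf : DifferentiableAt ℝ f x) (hh : DifferentiableAt ℝ h x)
    (hφ : DifferentiableAt ℝ φ x) :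
    ‖fderiv ℝ (fun y => AffineMap.lineMap (f y) (h y) (φ y)) x - fderiv ℝ f x‖ ≤
      ‖φ x‖ * ‖fderiv ℝ h x - fderiv ℝ f x‖ + ‖fderiv ℝ φ x‖ * ‖h x - f x‖ := by
  have hlineMap : HasFDerivAt (fun y => AffineMap.lineMap (f y) (h y) (φ y))
      (φ x • (fderiv ℝ h x - fderiv ℝ f x) + (fderiv ℝ φ x).smulRight (h x - f x)
        + fderiv ℝ f x) x := by
    simp only [AffineMap.lineMap_apply_module']
    exact (hφ.hasFDerivAt.smul (hh.hasFDerivAt.sub hf.hasFDerivAt)).add hf.hasFDerivAt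
  rw [hlineMap.fderiv, add_sub_cancel_right, ← norm_smul,
    ← ContinuousLinearMap.norm_smulRight_apply]
  exact norm_add_le _ _

theorem norm_translation_sub_le {s : Set E} (hconv : Convex ℝ s) {f : E → E}
    (hf : ∀ x ∈ s, DifferentiableAt ℝ f x) {η : ℝ}
    (hf' : ∀ x ∈ s, ‖fderiv ℝ f x - ContinuousLinearMap.id ℝ E‖ ≤ η) {q x : E} (hq : q ∈ s)
    (hx : x ∈ s) : ‖x + (f q - q) - f x‖ ≤ η * dist x q := by
  rw [dist_eq_norm, show x + (f q - q) - f x = -(f x - f q - (x - q)) by abel, norm_neg]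
  exact hconv.norm_image_sub_le_of_norm_fderiv_le' hf hf' hq hx

theorem norm_fderiv_lineMap_translation_sub_le {s : Set E} (hconv : Convex ℝ s) {f : E → E}
    (hf : ∀ x ∈ s, DifferentiableAt ℝ f x) {η : ℝ}
    (hf' : ∀ x ∈ s, ‖fderiv ℝ f x - ContinuousLinearMap.id ℝ E‖ ≤ η) {φ : E → ℝ}
    (hφ : Differentiable ℝ φ) (hφ_le : ∀ x, ‖φ x‖ ≤ 1) {C R : ℝ≥0}
    (hφ' : ∀ x, ‖fderiv ℝ φ x‖ ≤ C) {q : E} (hq : q ∈ s)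
    (hφ_supp : tsupport φ ⊆ closedBall q R) {x : E} (hx : x ∈ s) :
    ‖fderiv ℝ (fun y => AffineMap.lineMap (f y) (y + (f q - q)) (φ y)) x - fderiv ℝ f x‖ ≤
      η * (1 + C * R) := by
  have hη : 0 ≤ η := (norm_nonneg _).trans (hf' x hx)
  have htrans : fderiv ℝ (fun y => y + (f q - q)) x = ContinuousLinearMap.id ℝ E := by simp
  have hlinear : ‖φ x‖ * ‖fderiv ℝ (fun y => y + (f q - q)) x - fderiv ℝ f x‖ ≤ η := by
    rw [htrans, norm_sub_rev]
    exact (mul_le_of_le_one_left (norm_nonneg _) (hφ_le x)).trans (hf' x hx)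
  have hcutoff : ‖fderiv ℝ φ x‖ * ‖x + (f q - q) - f x‖ ≤ C * (η * R) := by
    by_cases hxφ : x ∈ tsupport φ
    · have hdist : dist x q ≤ R := hφ_supp hxφ
      have hdisp : ‖x + (f q - q) - f x‖ ≤ η * R :=
        (norm_translation_sub_le hconv hf hf' hq hx).trans (by gcongr)
      gcongr
      exact hφ' x
    · rw [fderiv_of_notMem_tsupport ℝ hxφ, norm_zero, zero_mul]
      positivity
  calc _ ≤ _ := norm_fderiv_lineMap_sub_le (hf x hx) (by fun_prop) (hφ x)
    _ ≤ η + C * (η * R) := add_le_add hlinear hcutoff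
    _ = η * (1 + C * R) := by ring

end Gluing

theorem local_linearization_to_translation_general (E : Type*) [NormedAddCommGroup E]
    [NormedSpace ℝ E] [FiniteDimensional ℝ E] (D : ℝ≥0) {θ χ' : ℝ} (hθ : 0 < θ) (hχ' : 0 < χ') :
    ∃ η : ℝ, 0 < η ∧ ∀ (n : ℕ∞) (s Q : Set E) (f : E → E), n ≠ 0 → IsOpen s → Convex ℝ s →
      Q ⊆ s → Q.Nonempty → Bornology.IsBounded Q → diam Q ≤ D → ContDiffOn ℝ n f s →
      (∀ x ∈ s, ‖fderiv ℝ f x - ContinuousLinearMap.id ℝ E‖ < η) →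
      ∃ (b : E) (g : E → E), IsDiffeoOntoImage ℝ n g s ∧
        (∀ x ∈ s, χ' ≤ infDist x Q → g x = f x) ∧ (∀ z ∈ Q, g z = z + b) ∧
        ∀ x ∈ s, ‖fderiv ℝ g x - fderiv ℝ f x‖ ≤ θ := by
  obtain ⟨C, hC⟩ := exists_contDiff_cutoff_norm_fderiv_le E hχ'
  let R : ℝ≥0 := ⟨χ', hχ'.le⟩ + D
  obtain ⟨η, hη_pos, hη⟩ := exists_pos_mul_lt (lt_min hθ one_pos) (2 + C * R : ℝ)
  lift η to ℝ≥0 using hη_pos.le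
  -- `κ` bounds both `‖Dg - Df‖` and `‖Dg - Id‖`; the latter has to be less than `1`.
  let κ : ℝ≥0 := (2 + C * R) * η
  have hκ : η * (1 + C * R) + η = κ := by
    simp only [κ]
    ring
  have hκθ : κ ≤ θ := (hη.trans_le (min_le_left _ _)).le
  have hκ_one : κ < 1 := by exact_mod_cast hη.trans_le (min_le_right _ _)
  refine ⟨η, hη_pos, fun n s Q f hn hs hconv hQs ⟨q, hq⟩ hQ_bdd hQ_diam hf hf' => ?_⟩
  obtain ⟨φ, hφ, hφ_supp, hφ_one, hφ_le, hφ'⟩ := hC Q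
  have hφ_near : ∀ x ∈ tsupport φ, infDist x Q < χ' := fun x hx =>
    (mem_thickening_iff_infDist_lt ⟨q, hq⟩).1 (hφ_supp hx)
  have hsupp_closedBall : tsupport φ ⊆ closedBall q R := fun x hx =>
    calc dist x q ≤ infDist x Q + diam Q := dist_le_infDist_add_diam hQ_bdd hq
      _ ≤ χ' + D := add_le_add (hφ_near x hx).le hQ_diam
  have hf_diff : ∀ x ∈ s, DifferentiableAt ℝ f x := fun x hx =>
    (hf.contDiffAt (hs.mem_nhds hx)).differentiableAt (by exact_mod_cast hn)
  let g : E → E := fun x => AffineMap.lineMap (f x) (x + (f q - q)) (φ x)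
  have hg : ContDiffOn ℝ n g s :=
    hf.lineMap (by fun_prop) (hφ.of_le (by exact_mod_cast le_top)).contDiffOn
  have hgf : ∀ x ∈ s, ‖fderiv ℝ g x - fderiv ℝ f x‖ ≤ η * (1 + C * R) := fun x =>
    norm_fderiv_lineMap_translation_sub_le hconv hf_diff (fun y hy => (hf' y hy).le)
      (hφ.differentiable (by simp)) hφ_le hφ' (hQs hq) hsupp_closedBall
  have hg_id : ∀ x ∈ s, ‖fderiv ℝ g x - ContinuousLinearMap.id ℝ E‖ ≤ κ := fun x hx =>
    calc _ ≤ ‖fderiv ℝ g x - fderiv ℝ f x‖ + ‖fderiv ℝ f x - ContinuousLinearMap.id ℝ E‖ :=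
          norm_sub_le_norm_sub_add_norm_sub _ _ _
      _ ≤ η * (1 + C * R) + η := add_le_add (hgf x hx) (hf' x hx).le
      _ = κ := by exact_mod_cast hκ
  refine ⟨f q - q, g, isDiffeoOntoImage_of_norm_fderiv_sub_id_le (by exact_mod_cast hn) hs hconv hg
    hκ_one hg_id, fun x _ hx => ?_, fun z hz => ?_, fun x hx => (hgf x hx).trans ?_⟩
  · have hxφ : φ x = 0 := image_eq_zero_of_notMem_tsupport fun h => hx.not_gt (hφ_near x h)
    simp only [g, hxφ, AffineMap.lineMap_apply_zero]
  · simp only [g, hφ_one z hz, AffineMap.lineMap_apply_one]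
  · linarith

/-- **Local linearization lemma (non-conservative case).**  For every `d ≥ 1` and
`θ, χ′ > 0` there is `η > 0` such that: if `Q` is a compact subset of the closed unit ball
of `ℝ^d`, homeomorphic to the closed unit ball and of diameter `1`, and `f : B(0,2) → ℝ^d` is
a `C^∞` diffeomorphism onto its image with `‖Df − Id‖ < η` on `B(0,2)`, then there is a `C^∞`
diffeomorphism onto its image `g : B(0,2) → ℝ^d` coinciding with `f` at distance `≥ χ′` from
`Q`, equal to a translation `z ↦ z + b` on `Q`, and satisfying `‖Dg − Df‖ ≤ θ` on `B(0,2)`. -/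
theorem local_linearization_to_translation
    (d : ℕ) (hd : 1 ≤ d) (θ χ' : ℝ) (hθ : 0 < θ) (hχ' : 0 < χ') :
    ∃ η : ℝ, 0 < η ∧
      ∀ Q : Set (EuclideanSpace ℝ (Fin d)),
        IsCompact Q → Q ⊆ closedBall (0 : EuclideanSpace ℝ (Fin d)) 1 →
        Nonempty (Q ≃ₜ (closedBall (0 : EuclideanSpace ℝ (Fin d)) 1 :
          Set (EuclideanSpace ℝ (Fin d)))) →
        Metric.diam Q = 1 →
        ∀ f : EuclideanSpace ℝ (Fin d) → EuclideanSpace ℝ (Fin d),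
          ContDiffOn ℝ (⊤ : ℕ∞) f (ball (0 : EuclideanSpace ℝ (Fin d)) 2) →
          Set.InjOn f (ball (0 : EuclideanSpace ℝ (Fin d)) 2) →
          IsOpen (f '' ball (0 : EuclideanSpace ℝ (Fin d)) 2) →
          (∃ finv, ContDiffOn ℝ (⊤ : ℕ∞) finv (f '' ball (0 : EuclideanSpace ℝ (Fin d)) 2) ∧
            ∀ x ∈ ball (0 : EuclideanSpace ℝ (Fin d)) 2, finv (f x) = x) →
          (∀ x ∈ ball (0 : EuclideanSpace ℝ (Fin d)) 2,
            ‖fderiv ℝ f x - ContinuousLinearMap.id ℝ (EuclideanSpace ℝ (Fin d))‖ < η) →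
          ∃ b : EuclideanSpace ℝ (Fin d),
          ∃ g : EuclideanSpace ℝ (Fin d) → EuclideanSpace ℝ (Fin d),
            ContDiffOn ℝ (⊤ : ℕ∞) g (ball (0 : EuclideanSpace ℝ (Fin d)) 2) ∧
            Set.InjOn g (ball (0 : EuclideanSpace ℝ (Fin d)) 2) ∧
            IsOpen (g '' ball (0 : EuclideanSpace ℝ (Fin d)) 2) ∧
            (∃ ginv, ContDiffOn ℝ (⊤ : ℕ∞) ginv (g '' ball (0 : EuclideanSpace ℝ (Fin d)) 2) ∧
              ∀ x ∈ ball (0 : EuclideanSpace ℝ (Fin d)) 2, ginv (g x) = x) ∧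
            (∀ x ∈ ball (0 : EuclideanSpace ℝ (Fin d)) 2,
              χ' ≤ infDist x Q → g x = f x) ∧
            (∀ z ∈ Q, g z = z + b) ∧
            (∀ x ∈ ball (0 : EuclideanSpace ℝ (Fin d)) 2,
              ‖fderiv ℝ g x - fderiv ℝ f x‖ ≤ θ) := by
  obtain ⟨η, hη, h⟩ :=
    local_linearization_to_translation_general (EuclideanSpace ℝ (Fin d)) 1 hθ hχ'
  refine ⟨η, hη, fun Q hQ hQ_ball _ hQ_diam f hf _ _ _ hf' => ?_⟩
  obtain ⟨b, g, hg, hgf, hgb, hg'⟩ := h ⊤ (ball 0 2) Q f ENat.top_ne_zero isOpen_ball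
    (convex_ball 0 2) (hQ_ball.trans (closedBall_subset_ball one_lt_two))
    (Set.nonempty_iff_ne_empty.2 (by rintro rfl; simp at hQ_diam)) hQ.isBounded hQ_diam.le hf hf'
  exact ⟨b, g, hg.contDiffOn, hg.injOn, hg.isOpen_image, hg.exists_leftInvOn, hgf, hgb, hg'⟩
end
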